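/- arXiv:2111.06299 — 12 statements merged into one kernel-verified Lean document; each statement's English description precedes it below -/
import Mathlib

section
/- Let (T, {B_i}) be a tree decomposition of a finite graph G, rooted at a node r with parent map p. Suppose {B'_i} is a family of vertex sets indexed by the nodes of T with B'_r = B_r and, for every node i ≠ r, B_i ⊆ B'_i ⊆ B_i ∪ B'_{p(i)}. Then (T, {B'_i}) is also a tree decomposition of G. -/
/-!
STATEMENT 0: Let (T, {B_i}) be a tree decomposition of a finite graph G, rooted at a
node r with parent map p. Suppose {B'_i} is a family of vertex sets indexed by the
nodes of T with B'_r = B_r and, for every node i ≠ r, B_i ⊆ B'_i ⊆ B_i ∪ B'_{p(i)}.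
Then (T, {B'_i}) is also a tree decomposition of G.
-/

open SimpleGraph

/-- `(T, B)` is a tree decomposition of the graph `G`. -/
structure IsTreeDecomp {V ι : Type*} (G : SimpleGraph V) (T : SimpleGraph ι)
    (B : ι → Set V) : Prop where
  isTree : T.IsTree
  exists_bag : ∀ v : V, ∃ i, v ∈ B i
  edge_bag : ∀ ⦃u v : V⦄, G.Adj u v → ∃ i, u ∈ B i ∧ v ∈ B i
  bag_connected : ∀ (v : V) (i j : ι), v ∈ B i → v ∈ B j →
    ∀ p : T.Walk i j, p.IsPath → ∀ k ∈ p.support, v ∈ B k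

/-- `par` is the parent map of the tree `T` with respect to the root `r`:
for every node `i ≠ r`, `par i` is a neighbor of `i` lying on the path from `i`
to `r` (equivalently, `i` does not lie on the path from `par i` to `r`). -/
def IsParentMap {ι : Type*} (T : SimpleGraph ι) (r : ι) (par : ι → ι) : Prop :=
  ∀ i, i ≠ r → T.Adj i (par i) ∧
    ∀ p : T.Walk (par i) r, p.IsPath → i ∉ p.support

theorem stmt0 {V ι : Type*} [Fintype V] [Fintype ι]
    (G : SimpleGraph V) (T : SimpleGraph ι) (B B' : ι → Set V)
    (r : ι) (par : ι → ι) (hpar : IsParentMap T r par)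
    (hTD : IsTreeDecomp G T B)
    (hroot : B' r = B r)
    (hsub : ∀ i, i ≠ r → B i ⊆ B' i ∧ B' i ⊆ B i ∪ B' (par i)) :
    IsTreeDecomp G T B' := by
  classical
  have hle : ∀ i, B i ⊆ B' i := by
    intro i
    by_cases h : i = r
    · subst h; rw [hroot]
    · exact (hsub i h).1
  have hT := hTD.isTree
  have huniq : ∀ {a b : ι} (p q : T.Walk a b), p.IsPath → q.IsPath → p = q := by
    intro a b p q hp hq
    have := hT.isAcyclic.path_unique ⟨p, hp⟩ ⟨q, hq⟩
    exact congrArg Subtype.val this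
  have hex : ∀ a b : ι, ∃ p : T.Walk a b, p.IsPath := by
    intro a b
    obtain ⟨w⟩ := hT.connected.preconnected a b
    exact ⟨w.bypass, w.bypass_isPath⟩
  have key : ∀ (v : V) (n : ℕ) (i : ι) (p : T.Walk i r), p.IsPath → p.length = n → v ∈ B' i →
      ∃ s, v ∈ B s ∧ ∃ w : T.Walk i s, ∀ k ∈ w.support, v ∈ B' k := by
    intro v n
    induction n with
    | zero =>
      intro i p _ hn hv
      have := Walk.eq_of_length_eq_zero hn
      subst this
      exact ⟨i, hroot ▸ hv, Walk.nil, by simpa using hv⟩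
    | succ n ih =>
      intro i p hp hn hv
      have hi : i ≠ r := by
        rintro rfl
        rw [huniq p Walk.nil hp Walk.IsPath.nil] at hn
        simp at hn
      rcases (hsub i hi).2 hv with h | h
      · exact ⟨i, h, Walk.nil, by simpa using hv⟩
      · obtain ⟨hadj, hnot⟩ := hpar i hi
        obtain ⟨q, hq⟩ := hex (par i) r
        have hc : (Walk.cons hadj q).IsPath := hq.cons (hnot q hq)
        rw [huniq p _ hp hc, Walk.length_cons] at hn
        obtain ⟨s, hs, w, hw⟩ := ih (par i) q hq (by omega) h
        refine ⟨s, hs, Walk.cons hadj w, ?_⟩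
        intro k hk
        rw [Walk.support_cons, List.mem_cons] at hk
        rcases hk with rfl | hk
        · exact hv
        · exact hw k hk
  refine ⟨hT, ?_, ?_, ?_⟩
  · intro v
    obtain ⟨i, hi⟩ := hTD.exists_bag v
    exact ⟨i, hle i hi⟩
  · intro u v huv
    obtain ⟨i, hu, hv⟩ := hTD.edge_bag huv
    exact ⟨i, hle i hu, hle i hv⟩
  · intro v i j hi hj p hp k hk
    obtain ⟨pi, hpi⟩ := hex i r
    obtain ⟨pj, hpj⟩ := hex j r
    obtain ⟨s, hs, w, hw⟩ := key v _ i pi hpi rfl hi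
    obtain ⟨t, ht, x, hx⟩ := key v _ j pj hpj rfl hj
    obtain ⟨m, hm⟩ := hex s t
    have hm' := hTD.bag_connected v s t hs ht m hm
    rw [huniq p ((w.append m).append x.reverse).bypass hp (Walk.bypass_isPath _)] at hk
    have hk2 := Walk.support_bypass_subset _ hk
    rw [Walk.mem_support_append_iff, Walk.mem_support_append_iff, Walk.support_reverse,
      List.mem_reverse] at hk2
    rcases hk2 with (h | h) | h
    · exact hw k h
    · exact hle k (hm' k h)
    · exact hx k h
end

section
/- Let (T, B) be a tree decomposition, let s, t be nodes of T, and let x be a node lying on the path T_{s↔t}. If T_{s↔x} has combinatorial length at most a and T_{x↔t} has combinatorial length at most b, then T_{s↔t} has combinatorial length at most a + b. -/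
/-!
STATEMENT 1: Let (T, B) be a tree decomposition, let s, t be nodes of T, and let x be
a node lying on the path T_{s↔t}. If T_{s↔x} has combinatorial length at most a and
T_{x↔t} has combinatorial length at most b, then T_{s↔t} has combinatorial length at
most a + b.
-/

open SimpleGraph

/-- One simplification step: delete a redundant internal node `x` (with neighbors
`u` and `w`, in some labeling of the two neighbors, satisfying `B x ∩ B w ⊆ B u`)
from the list of nodes of a path, joining its two former neighbors. -/
def SimpStep {V ι : Type*} (B : ι → Set V) (l l' : List ι) : Prop :=
  ∃ (l₁ l₂ : List ι) (u x w : ι),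
    l = l₁ ++ u :: x :: w :: l₂ ∧ l' = l₁ ++ u :: w :: l₂ ∧
      (B x ∩ B w ⊆ B u ∨ B x ∩ B u ⊆ B w)

/-- The path `T_{s↔t}` has combinatorial length at most `n`: some simplification of
the (unique) path from `s` to `t` has at most `n` edges (i.e. at most `n + 1` nodes). -/
def CombLenLE {V ι : Type*} (T : SimpleGraph ι) (B : ι → Set V) (s t : ι) (n : ℕ) : Prop :=
  ∀ p : T.Walk s t, p.IsPath →
    ∃ l : List ι, Relation.ReflTransGen (SimpStep B) p.support l ∧ l.length ≤ n + 1

theorem simpStep_append {V ι : Type*} {B : ι → Set V} {l l' : List ι} (c : List ι)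
    (h : SimpStep B l l') : SimpStep B (l ++ c) (l' ++ c) := by
  obtain ⟨l₁, l₂, u, x, w, rfl, rfl, h⟩ := h
  exact ⟨l₁, l₂ ++ c, u, x, w, by simp, by simp, h⟩

theorem simpStep_prepend {V ι : Type*} {B : ι → Set V} {l l' : List ι} (c : List ι)
    (h : SimpStep B l l') : SimpStep B (c ++ l) (c ++ l') := by
  obtain ⟨l₁, l₂, u, x, w, rfl, rfl, h⟩ := h
  exact ⟨c ++ l₁, l₂, u, x, w, by simp, by simp, h⟩

theorem simpStep_getLast {V ι : Type*} {B : ι → Set V} {l l' : List ι}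
    (h : SimpStep B l l') : l'.getLast? = l.getLast? := by
  obtain ⟨l₁, l₂, u, x, w, rfl, rfl, h⟩ := h
  simp [List.getLast?_append, List.getLast?_cons]

theorem simpSteps_getLast {V ι : Type*} {B : ι → Set V} {l l' : List ι}
    (h : Relation.ReflTransGen (SimpStep B) l l') : l'.getLast? = l.getLast? := by
  induction h with
  | refl => rfl
  | tail _ h ih => rw [simpStep_getLast h, ih]

theorem stmt1 {V ι : Type*} [Fintype V] [Fintype ι]
    (G : SimpleGraph V) (T : SimpleGraph ι) (B : ι → Set V)
    (hTD : IsTreeDecomp G T B)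
    (s t x : ι)
    (hx : ∀ p : T.Walk s t, p.IsPath → x ∈ p.support)
    (a b : ℕ)
    (ha : CombLenLE T B s x a) (hb : CombLenLE T B x t b) :
    CombLenLE T B s t (a + b) := by
  classical
  intro p hp
  have hxp := hx p hp
  obtain ⟨l1, h1, n1⟩ := ha (p.takeUntil x hxp) (hp.takeUntil hxp)
  obtain ⟨l2, h2, n2⟩ := hb (p.dropUntil x hxp) (hp.dropUntil hxp)
  have hs : p.support = (p.takeUntil x hxp).support ++ (p.dropUntil x hxp).support.tail := by
    rw [← Walk.support_append, Walk.take_spec]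
  have hl : l1.getLast? = some x := by
    rw [simpSteps_getLast h1, List.getLast?_eq_getLast_of_ne_nil (Walk.support_ne_nil _),
      Walk.getLast_support]
  obtain ⟨d, rfl⟩ := List.getLast?_eq_some_iff.1 hl
  refine ⟨d ++ l2, ?_, ?_⟩
  · rw [hs]
    have e1 := h1.lift (· ++ (p.dropUntil x hxp).support.tail)
      (fun _ _ h => simpStep_append _ h)
    have e2 := h2.lift (d ++ ·) (fun _ _ h => simpStep_prepend d h)
    refine e1.trans ?_
    have e : (d ++ [x]) ++ (p.dropUntil x hxp).support.tail = d ++ (p.dropUntil x hxp).support := by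
      rw [List.append_assoc, List.singleton_append, Walk.cons_tail_support]
    simp only [e]
    exact e2
  · simp at n1 ⊢
    omega
end

section
/- Let (T, B) be a tree decomposition of a graph G, rooted at r, of depth d, with maximum bag size m = max_w |B_w|, and let λ be an integer with 1 ≤ λ ≤ d. Then the bridge decomposition (T, B') is a tree decomposition of G, and every bag satisfies |B'_v| ≤ (λ + 1) · m. -/
/-!
STATEMENT 2: Let (T, B) be a tree decomposition of a graph G, rooted at r, of depth d,
with maximum bag size m = max_w |B_w|, and let λ be an integer with 1 ≤ λ ≤ d. Then
the bridge decomposition (T, B') is a tree decomposition of G, and every bag satisfies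
|B'_v| ≤ (λ + 1) · m.
-/

open SimpleGraph

theorem bd_split {ι : Type*} {T : SimpleGraph ι} {v r : ι} (p : T.Walk v r) :
    ∀ (l l' : List ι) (x : ι), p.support = l ++ x :: l' →
      ∃ (q : T.Walk v x) (q' : T.Walk x r), q.support = l ++ [x] ∧ q'.support = x :: l' := by
  induction p with
  | nil =>
    intro l l' x h
    rw [Walk.support_nil] at h
    cases l with
    | nil =>
      simp only [List.nil_append, List.cons.injEq] at h
      obtain ⟨rfl, rfl⟩ := h
      exact ⟨Walk.nil, Walk.nil, by simp, by simp⟩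
    | cons a l => simp at h
  | cons hadj p ih =>
    intro l l' x h
    rw [Walk.support_cons] at h
    cases l with
    | nil =>
      simp only [List.nil_append, List.cons.injEq] at h
      obtain ⟨rfl, h⟩ := h
      exact ⟨Walk.nil, Walk.cons hadj p, by simp, by simp [h]⟩
    | cons a l =>
      simp only [List.cons_append, List.cons.injEq] at h
      obtain ⟨rfl, h⟩ := h
      obtain ⟨q, q', h1, h2⟩ := ih l l' x h
      exact ⟨Walk.cons hadj q, q', by simp [h1], h2⟩

theorem bd_ncard {V ι : Type*} [Fintype V] (B : ι → Set V) (m : ℕ)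
    (h : ∀ w, (B w).ncard ≤ m) (L : List ι) :
    (⋃ w ∈ L, B w).ncard ≤ L.length * m := by
  induction L with
  | nil => simp
  | cons a L ih =>
    have : (⋃ w ∈ a :: L, B w) = B a ∪ ⋃ w ∈ L, B w := by
      ext x; simp
    rw [this]
    refine (Set.ncard_union_le _ _).trans ?_
    have := h a
    simp only [List.length_cons, Nat.add_mul]
    omega

theorem stmt2 {V ι : Type*} [Fintype V] [Fintype ι]
    (G : SimpleGraph V) (T : SimpleGraph ι) (B : ι → Set V)
    (hTD : IsTreeDecomp G T B)
    (r : ι)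
    -- the level of a node: the number of edges on the (unique) path to the root
    (lvl : ι → ℕ)
    (hlvl : ∀ (v : ι) (p : T.Walk v r), p.IsPath → p.length = lvl v)
    -- the depth of the rooted decomposition
    (d : ℕ) (hd : ∀ v, lvl v ≤ d) (hde : ∃ v, lvl v = d)
    -- the maximum bag size
    (m : ℕ) (hm : m = Finset.univ.sup fun w => (B w).ncard)
    (lam : ℕ) (hlam1 : 1 ≤ lam) (hlamd : lam ≤ d)
    -- `syn v` is the synchronization ancestor of `v ≠ r`: the first node after `v`
    -- on the path from `v` to `r` whose level is divisible by `lam`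
    (syn : ι → ι)
    (hsyn : ∀ v, v ≠ r → ∀ p : T.Walk v r, p.IsPath →
      ∃ l₁ l₂ : List ι, p.support = v :: (l₁ ++ syn v :: l₂) ∧
        lam ∣ lvl (syn v) ∧ ∀ w ∈ l₁, ¬ lam ∣ lvl w)
    -- the bridge decomposition
    (B' : ι → Set V)
    (hB'r : B' r = B r)
    (hB' : ∀ v, v ≠ r → ∀ p : T.Walk v (syn v), p.IsPath →
      B' v = ⋃ w ∈ p.support, B w) :
    IsTreeDecomp G T B' ∧ ∀ v, (B' v).ncard ≤ (lam + 1) * m := by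
  classical
  obtain ⟨hT, hV, hE, hC⟩ := hTD
  have hpath : ∀ v, ∃ p : T.Walk v r, p.IsPath := fun v => by
    obtain ⟨w⟩ := hT.connected.preconnected v r
    exact ⟨w.bypass, w.bypass_isPath⟩
  have hlev : ∀ {v : ι} (p : T.Walk v r), p.IsPath → ∀ l u l', p.support = l ++ u :: l' →
      lvl u = l'.length ∧ ∃ q : T.Walk u r, q.IsPath ∧ q.support = u :: l' := by
    intro v p hp l u l' h
    obtain ⟨q, q', h1, h2⟩ := bd_split p l l' u h
    have hq' : q'.IsPath := by
      rw [Walk.isPath_def, h2]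
      have := hp.support_nodup
      rw [h] at this
      exact this.of_append_right
    refine ⟨?_, q', hq', h2⟩
    have h3 := q'.length_support
    rw [h2, List.length_cons] at h3
    rw [← hlvl u q' hq']
    omega
  have hBag : ∀ v, v ≠ r → ∀ p : T.Walk v r, p.IsPath → ∀ l₁ l₂ : List ι,
      p.support = v :: (l₁ ++ syn v :: l₂) → B' v = ⋃ w ∈ v :: (l₁ ++ [syn v]), B w := by
    intro v hv p hp l₁ l₂ h
    obtain ⟨q, q', h1, h2⟩ := bd_split p (v :: l₁) l₂ (syn v) h
    have hq : q.IsPath := by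
      rw [Walk.isPath_def, h1]
      have := hp.support_nodup
      rw [h] at this
      refine this.sublist ?_
      simp
    rw [hB' v hv q hq, h1]
    rfl
  have hsub : ∀ v, B v ⊆ B' v := by
    intro v x hx
    by_cases hv : v = r
    · subst hv; rw [hB'r]; exact hx
    · obtain ⟨p, hp⟩ := hpath v
      obtain ⟨l₁, l₂, h, -, -⟩ := hsyn v hv p hp
      rw [hBag v hv p hp l₁ l₂ h]
      simp [hx]
  have hmain : ∀ x v, x ∈ B' v → ∃ w, x ∈ B w ∧ ∃ q : T.Walk v w,
      ∀ u ∈ q.support, x ∈ B' u := by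
    intro x v hx
    by_cases hv : v = r
    · subst hv
      refine ⟨v, by rwa [hB'r] at hx, Walk.nil, ?_⟩
      simpa using hx
    obtain ⟨p, hp⟩ := hpath v
    obtain ⟨l₁, l₂, h, hs, hl⟩ := hsyn v hv p hp
    have hx' := hx
    rw [hBag v hv p hp l₁ l₂ h] at hx'
    simp only [Set.mem_iUnion] at hx'
    obtain ⟨w, hw, hxw⟩ := hx'
    refine ⟨w, hxw, ?_⟩
    rcases List.mem_cons.1 hw with rfl | hw
    · exact ⟨Walk.nil, by simpa using hx⟩
    obtain ⟨a, b, hab⟩ := List.append_of_mem hw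
    have ha : ∀ y ∈ a, y ∈ l₁ := by
      intro y hy
      rcases List.eq_nil_or_concat b with rfl | ⟨b', z, rfl⟩
      · have := (List.append_inj' hab rfl).1
        rwa [this]
      · have h4 : l₁ ++ [syn v] = (a ++ w :: b') ++ [z] := by simp [hab]
        have := (List.append_inj' h4 rfl).1
        rw [this]; simp [hy]
    have hps : p.support = (v :: a) ++ w :: (b ++ l₂) := by
      have : l₁ ++ syn v :: l₂ = (l₁ ++ [syn v]) ++ l₂ := by simp
      rw [h, this, hab]; simp
    obtain ⟨q, q', h1, h2⟩ := bd_split p _ _ _ hps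
    refine ⟨q, ?_⟩
    intro u hu
    rw [h1] at hu
    simp only [List.cons_append, List.mem_cons, List.mem_append, List.not_mem_nil, or_false] at hu
    rcases hu with rfl | hu | rfl
    · exact hx
    swap
    · exact hsub _ hxw
    obtain ⟨a1, a2, rfl⟩ := List.append_of_mem hu
    obtain ⟨hlu, pu, hpu, hpus⟩ := hlev p hp (v :: a1) u (a2 ++ w :: (b ++ l₂)) (by rw [hps]; simp)
    have hur : u ≠ r := by
      rintro rfl
      have := hlvl u Walk.nil Walk.IsPath.nil
      rw [hlu] at this
      simp at this
    obtain ⟨m₁, m₂, g, gs, gl⟩ := hsyn u hur pu hpu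
    rw [hBag u hur pu hpu m₁ m₂ g]
    have hwm : w ∈ m₁ ++ [syn u] := by
      rw [hpus] at g
      have g' : a2 ++ w :: (b ++ l₂) = (m₁ ++ [syn u]) ++ m₂ := by
        have := (List.cons.inj g).2
        simp [this]
      rcases List.append_eq_append_iff.1 g' with ⟨c, hc1, hc2⟩ | ⟨c, hc1, hc2⟩
      · cases c with
        | nil =>
          exfalso
          apply hl (syn u) _ gs
          apply ha
          simp only [List.append_nil] at hc1
          simp [← hc1]
        | cons e c =>
          have := (List.cons.inj hc2).1
          rw [hc1, this]; simp
      · exfalso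
        apply hl (syn u) _ gs
        apply ha
        rw [hc1]; simp
    simp only [Set.mem_iUnion]
    exact ⟨w, List.mem_cons_of_mem _ hwm, hxw⟩
  refine ⟨⟨hT, ?_, ?_, ?_⟩, ?_⟩
  · intro v
    obtain ⟨i, hi⟩ := hV v
    exact ⟨i, hsub i hi⟩
  · intro u v huv
    obtain ⟨i, hi, hj⟩ := hE huv
    exact ⟨i, hsub i hi, hsub i hj⟩
  · intro x i j hi hj p hp k hk
    obtain ⟨w, hw, q, hq⟩ := hmain x i hi
    obtain ⟨w', hw', q', hq'⟩ := hmain x j hj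
    obtain ⟨s⟩ := hT.connected.preconnected w w'
    have hs := hC x w w' hw hw' s.bypass s.bypass_isPath
    let W := (q.append s.bypass).append q'.reverse
    have hpW : p = W.bypass := by
      have := hT.IsAcyclic.path_unique ⟨p, hp⟩ ⟨W.bypass, W.bypass_isPath⟩
      exact congrArg Subtype.val this
    rw [hpW] at hk
    have hk := W.support_bypass_subset hk
    simp only [W, Walk.mem_support_append_iff, Walk.support_reverse, List.mem_reverse] at hk
    rcases hk with (hk | hk) | hk
    · exact hq k hk
    · exact hsub _ (hs k hk)
    · exact hq' k hk
  · intro v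
    have hmb : ∀ w, (B w).ncard ≤ m := fun w => by
      rw [hm]
      exact Finset.le_sup (f := fun w => (B w).ncard) (Finset.mem_univ w)
    by_cases hv : v = r
    · subst hv
      rw [hB'r]
      exact (hmb v).trans (Nat.le_mul_of_pos_left _ (by omega))
    obtain ⟨p, hp⟩ := hpath v
    obtain ⟨l₁, l₂, h, hs, hl⟩ := hsyn v hv p hp
    rw [hBag v hv p hp l₁ l₂ h]
    refine (bd_ncard B m hmb _).trans (Nat.mul_le_mul_right _ ?_)
    have hlen : l₁.length < lam := by
      by_contra hcon
      have hlt : l₁.length - lam < l₁.length := by omega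
      have hdec : l₁ = l₁.take (l₁.length - lam) ++ l₁[l₁.length - lam] ::
          l₁.drop (l₁.length - lam + 1) := by
        rw [← List.drop_eq_getElem_cons hlt, List.take_append_drop]
      have h1 := (hlev p hp (v :: l₁.take (l₁.length - lam)) (l₁[l₁.length - lam])
        (l₁.drop (l₁.length - lam + 1) ++ syn v :: l₂) (by
          have h5 := congrArg (fun l => l ++ syn v :: l₂) hdec
          simp only [List.append_assoc, List.cons_append] at h5
          rw [h, List.cons_append, ← h5])).1
      have h2 := (hlev p hp (v :: l₁) (syn v) l₂ (by rw [h]; rfl)).1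
      apply hl _ (List.getElem_mem hlt)
      rw [h1]
      have : (l₁.drop (l₁.length - lam + 1) ++ syn v :: l₂).length = lam + lvl (syn v) := by
        simp only [List.length_append, List.length_drop, List.length_cons]
        omega
      rw [this]
      exact (Nat.dvd_add_right (dvd_refl lam)).2 hs
    simp only [List.length_cons, List.length_append, List.length_nil]
    omega
end

section
/- Let (T, B) be a tree decomposition of a graph G, rooted at r, of depth d, and let λ be an integer with 1 ≤ λ ≤ d. Then the bridge decomposition (T, B') has combinatorial diameter at most 2⌊d/λ⌋ + 4. -/
/-!
STATEMENT 3: Let (T, B) be a tree decomposition of a graph G, rooted at r, of depth d,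
and let λ be an integer with 1 ≤ λ ≤ d. Then the bridge decomposition (T, B') has
combinatorial diameter at most 2⌊d/λ⌋ + 4.
-/

open SimpleGraph

/-- `(T, B)` has combinatorial diameter at most `n`. -/
def CombDiamLE {V ι : Type*} (T : SimpleGraph ι) (B : ι → Set V) (n : ℕ) : Prop :=
  ∀ s t : ι, CombLenLE T B s t n

theorem simpStep_reverse {V ι : Type*} {B : ι → Set V} {l l' : List ι}
    (h : SimpStep B l l') : SimpStep B l.reverse l'.reverse := by
  obtain ⟨l₁, l₂, u, x, w, rfl, rfl, h⟩ := h
  exact ⟨l₂.reverse, l₁.reverse, w, x, u, by simp, by simp, h.symm⟩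

theorem simp_rtg_reverse {V ι : Type*} {B : ι → Set V} {l l' : List ι}
    (h : Relation.ReflTransGen (SimpStep B) l l') :
    Relation.ReflTransGen (SimpStep B) l.reverse l'.reverse :=
  Relation.ReflTransGen.lift List.reverse (fun _ _ h => simpStep_reverse h) _ _ h

theorem simp_up {V ι : Type*} (B : ι → Set V) (P : ι → Prop) [DecidablePred P]
    (a : ι) (post : List ι) (l : List ι) : ∀ (pre : List ι) (x : ι),
    List.IsChain (fun v w => ¬ P w → B w ⊆ B v) (x :: l) →
    Relation.ReflTransGen (SimpStep B) (pre ++ x :: (l ++ a :: post))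
      (pre ++ x :: (l.filter P ++ a :: post)) := by
  induction l with
  | nil => intro pre x _; exact Relation.ReflTransGen.refl
  | cons v l ih =>
    intro pre x hc
    rw [List.isChain_cons_cons] at hc
    by_cases hv : P v
    · have := ih (pre ++ [x]) v hc.2
      simpa [hv] using this
    · have hs := hc.1 hv
      have h2 : List.IsChain (fun v w => ¬ P w → B w ⊆ B v) (x :: l) := by
        cases l with
        | nil => simp
        | cons w l =>
          rw [List.isChain_cons_cons] at hc ⊢
          exact ⟨fun hw => (hc.2.1 hw).trans hs, hc.2.2⟩
      have := ih pre x h2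
      rw [List.filter_cons_of_neg (by simpa using hv)]
      refine Relation.ReflTransGen.head ?_ this
      obtain ⟨w, m, hm⟩ : ∃ w m, l ++ a :: post = w :: m := by
        cases l <;> simp
      refine ⟨pre, m, x, v, w, by simp [hm], by simp [hm], Or.inl ?_⟩
      exact fun z hz => hs hz.1

theorem count_sync {ι : Type*} (lvl : ι → ℕ) (d lam : ℕ) (hlam : 1 ≤ lam)
    (hd : ∀ v, lvl v ≤ d) (l : List ι) (hl : l.Pairwise (fun v w => lvl w < lvl v)) :
    (l.filter (fun v => lam ∣ lvl v)).length ≤ d / lam + 1 := by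
  have h1 : ((l.filter (fun v => lam ∣ lvl v)).map (fun v => lvl v / lam)).Nodup := by
    rw [List.Nodup, List.pairwise_map, List.pairwise_filter]
    refine hl.imp ?_
    intro v w h hv hw he
    simp only [decide_eq_true_eq] at hv hw
    have := Nat.div_mul_cancel hv
    have := Nat.div_mul_cancel hw
    rw [he] at *
    omega
  have h2 := List.toFinset_card_of_nodup h1
  rw [List.length_map] at h2
  rw [← h2, ← Finset.card_range (d / lam + 1)]
  apply Finset.card_le_card
  intro k hk
  simp only [List.mem_toFinset, List.mem_map] at hk
  obtain ⟨v, _, rfl⟩ := hk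
  rw [Finset.mem_range]
  exact Nat.lt_succ_of_le (Nat.div_le_div_right (hd v))

theorem simp_side {V ι : Type*} (B : ι → Set V) (lvl : ι → ℕ) (d lam : ℕ) (hlam : 1 ≤ lam)
    (hd : ∀ v, lvl v ≤ d) (R : ι → ι → Prop) (hR : ∀ v w, R v w → lvl v = lvl w + 1)
    (hB : ∀ v w, R v w → ¬ lam ∣ lvl w → B w ⊆ B v)
    (U : List ι) (hU : U.IsChain R) :
    ∃ U' : List ι, U'.length ≤ d / lam + 2 ∧ ∀ a post,
      Relation.ReflTransGen (SimpStep B) (U ++ a :: post) (U' ++ a :: post) := by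
  cases U with
  | nil => exact ⟨[], by simp, fun _ _ => .refl⟩
  | cons x l =>
    refine ⟨x :: l.filter (fun v => lam ∣ lvl v), ?_, fun a post => ?_⟩
    · have hp : (x :: l).Pairwise (fun v w => lvl w < lvl v) := by
        haveI : IsTrans ι (fun v w => lvl w < lvl v) := ⟨fun _ _ _ h h' => h'.trans h⟩
        rw [← List.isChain_iff_pairwise]
        exact hU.imp (fun v w h => by have := hR v w h; omega)
      have := count_sync lvl d lam hlam hd l (List.pairwise_cons.1 hp).2
      simpa using this
    · have := simp_up B (fun v => lam ∣ lvl v) a post l [] x (hU.imp (fun v w h => hB v w h))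
      simpa using this

theorem path_split {ι : Type*} (T : SimpleGraph ι) (R : ι → ι → Prop)
    (hadj : ∀ v w, T.Adj v w → R v w ∨ R w v)
    (huniq : ∀ v w w', R v w → R v w' → w = w') {s t : ι} (p : T.Walk s t) (hp : p.IsPath) :
    ∃ U a D, p.support = U ++ a :: D ∧ (U ++ [a]).IsChain R ∧ (D.reverse ++ [a]).IsChain R := by
  induction p with
  | @nil u => exact ⟨[], u, [], by simp, by simp, by simp⟩
  | @cons s v t h q ih =>
    rw [Walk.cons_isPath_iff] at hp
    obtain ⟨U, a, D, hs, hU, hD⟩ := ih hp.1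
    have hq : q.support = v :: q.support.tail := q.cons_tail_support.symm
    rcases hadj _ _ h with hr | hr
    · refine ⟨s :: U, a, D, by simp [hs], ?_, hD⟩
      cases U with
      | nil =>
        rw [hs] at hq
        simp at hq
        obtain rfl := hq
        simpa using hr
      | cons u U =>
        rw [hs] at hq
        simp at hq
        obtain rfl := hq
        simp only [List.cons_append, List.isChain_cons_cons] at hU ⊢
        exact ⟨hr, hU⟩
    · cases U with
      | nil =>
        rw [hs] at hq
        simp at hq
        obtain rfl := hq
        refine ⟨[], s, a :: D, by simp [hs], by simp, ?_⟩
        rw [List.reverse_cons, List.append_assoc]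
        simp only [List.singleton_append]
        rw [List.isChain_split]
        exact ⟨hD, by simpa using hr⟩
      | cons u U =>
        exfalso
        have hq' := hq
        rw [hs] at hq
        simp at hq
        obtain rfl := hq
        obtain ⟨w, m, hm⟩ : ∃ w m, U ++ [a] = w :: m := by cases U <;> simp
        rw [List.cons_append, hm, List.isChain_cons_cons] at hU
        have hw := huniq _ _ _ hr hU.1
        apply hp.2
        have : q.support = u :: ((U ++ [a]) ++ D) := by simp [hs]
        rw [this, hm, hw]
        simp

theorem append_sync_unique {ι : Type*} (P : ι → Prop) (y z : ι) (hy : P y) (hz : P z) :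
    ∀ (l m l' m' : List ι), l ++ y :: l' = m ++ z :: m' → (∀ w ∈ l, ¬ P w) → (∀ w ∈ m, ¬ P w) →
    y = z := by
  intro l
  induction l with
  | nil =>
    intro m l' m' h _ hm
    cases m with
    | nil => simp at h; exact h.1
    | cons u m => simp at h; exact absurd hy (h.1 ▸ hm u (by simp))
  | cons x l ih =>
    intro m l' m' h hl hm
    cases m with
    | nil => simp at h; exact absurd hz (h.1 ▸ hl x (by simp))
    | cons u m =>
      simp at h
      exact ih m l' m' h.2 (fun w hw => hl w (by simp [hw])) (fun w hw => hm w (by simp [hw]))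

theorem stmt3 {V ι : Type*} [Fintype V] [Fintype ι]
    (G : SimpleGraph V) (T : SimpleGraph ι) (B : ι → Set V)
    (hTD : IsTreeDecomp G T B)
    (r : ι)
    -- the level of a node: the number of edges on the (unique) path to the root
    (lvl : ι → ℕ)
    (hlvl : ∀ (v : ι) (p : T.Walk v r), p.IsPath → p.length = lvl v)
    -- the depth of the rooted decomposition
    (d : ℕ) (hd : ∀ v, lvl v ≤ d) (hde : ∃ v, lvl v = d)
    (lam : ℕ) (hlam1 : 1 ≤ lam) (hlamd : lam ≤ d)
    -- `syn v` is the synchronization ancestor of `v ≠ r`: the first node after `v`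
    -- on the path from `v` to `r` whose level is divisible by `lam`
    (syn : ι → ι)
    (hsyn : ∀ v, v ≠ r → ∀ p : T.Walk v r, p.IsPath →
      ∃ l₁ l₂ : List ι, p.support = v :: (l₁ ++ syn v :: l₂) ∧
        lam ∣ lvl (syn v) ∧ ∀ w ∈ l₁, ¬ lam ∣ lvl w)
    -- the bridge decomposition
    (B' : ι → Set V)
    (hB'r : B' r = B r)
    (hB' : ∀ v, v ≠ r → ∀ p : T.Walk v (syn v), p.IsPath →
      B' v = ⋃ w ∈ p.support, B w) :
    CombDiamLE T B' (2 * (d / lam) + 4) := by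
  classical
  have hT := hTD.isTree
  have hex : ∀ v w, ∃ p : T.Walk v w, p.IsPath := fun v w =>
    (hT.existsUnique_path v w).exists
  have hun : ∀ v w (p q : T.Walk v w), p.IsPath → q.IsPath → p = q := fun v w p q hp hq =>
    (hT.existsUnique_path v w).unique hp hq
  let R : ι → ι → Prop := fun v w => T.Adj v w ∧ lvl v = lvl w + 1
  have hcons : ∀ v w (h : T.Adj v w) (p : T.Walk w r), p.IsPath → lvl v = lvl w + 1 →
      (Walk.cons h p).IsPath := by
    intro v w h p hp hl
    rw [Walk.cons_isPath_iff]
    refine ⟨hp, fun hv => ?_⟩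
    have h1 := hlvl v _ (hp.dropUntil hv)
    have h2 := hlvl w p hp
    have h3 := p.length_dropUntil_le hv
    omega
  have hdist : ∀ v, lvl v = T.dist r v := by
    intro v
    obtain ⟨p, hp, hl⟩ := hT.isConnected.exists_path_of_dist v r
    rw [← hlvl v p hp, hl, SimpleGraph.dist_comm]
  have hadj : ∀ v w, T.Adj v w → R v w ∨ R w v := by
    intro v w h
    have h1 := hT.dist_ne_of_adj r h
    have h2 := h.diff_dist_adj (u := r)
    rw [← hdist, ← hdist] at h1 h2
    rcases h2 with h2 | h2 | h2
    · exact absurd h2.symm h1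
    · exact Or.inr ⟨h.symm, h2⟩
    · refine Or.inl ⟨h, ?_⟩
      omega
  have huniq : ∀ v w w', R v w → R v w' → w = w' := by
    rintro v w w' ⟨h, hl⟩ ⟨h', hl'⟩
    obtain ⟨p, hp⟩ := hex w r
    obtain ⟨p', hp'⟩ := hex w' r
    have := hun v r _ _ (hcons v w h p hp hl) (hcons v w' h' p' hp' hl')
    have h2 := congrArg Walk.snd this
    simpa using h2
  have hB : ∀ v w, R v w → ¬ lam ∣ lvl w → B' w ⊆ B' v := by
    rintro v w ⟨h, hl⟩ hw
    have hr0 : lvl r = 0 := (hlvl r Walk.nil Walk.IsPath.nil).symm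
    have hwr : w ≠ r := by rintro rfl; exact hw (by simp [hr0])
    have hvr : v ≠ r := by rintro rfl; omega
    obtain ⟨p, hp⟩ := hex w r
    have hc := hcons v w h p hp hl
    obtain ⟨m₁, m₂, hm, hmd, hm'⟩ := hsyn w hwr p hp
    obtain ⟨l₁, l₂, hl, hld, hl'⟩ := hsyn v hvr _ hc
    rw [Walk.support_cons, hm] at hl
    simp only [List.cons.injEq, true_and] at hl
    have he : syn v = syn w := by
      refine append_sync_unique (fun w => lam ∣ lvl w) _ _ hld hmd l₁ (w :: m₁) l₂ m₂
        (by simp [hl]) hl' ?_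
      intro u hu
      rcases List.mem_cons.1 hu with rfl | hu
      · exact hw
      · exact hm' u hu
    have hmem : syn w ∈ p.support := by rw [hm]; simp
    have hq := hp.takeUntil hmem
    have hvq : (Walk.cons h (p.takeUntil _ hmem)).IsPath := by
      rw [Walk.cons_isPath_iff] at hc ⊢
      exact ⟨hq, fun hv => hc.2 (p.support_takeUntil_subset_support hmem hv)⟩
    rw [hB' w hwr _ hq]
    have h3 := hB' v hvr
    rw [he] at h3
    rw [h3 _ hvq]
    apply Set.biUnion_subset_biUnion_left
    intro u hu
    exact List.mem_cons_of_mem _ hu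
  intro s t p hp
  obtain ⟨U, a, D, hs, hU, hD⟩ := path_split T R hadj huniq p hp
  obtain ⟨U', hUl, hU'⟩ := simp_side B' lvl d lam hlam1 hd R (fun _ _ h => h.2) hB U
    hU.left_of_append
  obtain ⟨D', hDl, hD'⟩ := simp_side B' lvl d lam hlam1 hd R (fun _ _ h => h.2) hB D.reverse
    hD.left_of_append
  refine ⟨U' ++ a :: D'.reverse, ?_, ?_⟩
  · rw [hs]
    refine (hU' a D).trans ?_
    have := simp_rtg_reverse (hD' a U'.reverse)
    simpa using this
  · simp only [List.length_append, List.length_cons, List.length_reverse]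
    omega
end

section
/- Let (T, B) be a tree decomposition of a graph G, rooted at r, of depth d, with maximum bag size m = max_w |B_w|, and let λ be an integer with 1 ≤ λ ≤ d. Then the highway decomposition (T, B') is a tree decomposition of G, and every bag satisfies |B'_v| ≤ (λ + ⌊d/λ⌋ + 2) · m. -/
/-!
STATEMENT 4: Let (T, B) be a tree decomposition of a graph G, rooted at r, of depth d,
with maximum bag size m = max_w |B_w|, and let λ be an integer with 1 ≤ λ ≤ d. Then
the highway decomposition (T, B') is a tree decomposition of G, and every bag satisfies
|B'_v| ≤ (λ + ⌊d/λ⌋ + 2) · m.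
-/

open SimpleGraph

theorem aux_levels {ι : Type*} {T : SimpleGraph ι} {r : ι} {lvl : ι → ℕ}
    (hlvl : ∀ (v : ι) (p : T.Walk v r), p.IsPath → p.length = lvl v)
    (v : ι) (p : T.Walk v r) (hp : p.IsPath) :
    p.support.map lvl = (List.range (lvl v + 1)).reverse := by
  induction p with
  | nil =>
    have := hlvl _ _ hp
    simp at this
    simp [← this]
  | cons h q ih =>
    have h1 := hlvl _ _ hp
    have hq := hp.of_cons
    have h2 := hlvl _ _ hq
    have h3 := ih hlvl hq
    rw [Walk.length_cons, h2] at h1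
    rw [Walk.support_cons, List.map_cons, h3, ← h1, List.range_succ (n := _ + 1)]
    simp

theorem aux_sorted (n : ℕ) : ((List.range n).reverse).Pairwise (fun a b => b < a) := by
  rw [List.pairwise_reverse]
  exact List.pairwise_lt_range

theorem aux_syn (n s lam : ℕ) (hlam : 1 ≤ lam) (l1 l2 : List ℕ)
    (h : (List.range (n + 1)).reverse = n :: (l1 ++ s :: l2)) (hs : lam ∣ s)
    (hl : ∀ w ∈ l1, ¬ lam ∣ w) : s = lam * ((n - 1) / lam) := by
  have hsort := aux_sorted (n + 1)
  rw [h] at hsort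
  have hsn : s < n := by
    rw [List.pairwise_cons] at hsort
    exact hsort.1 s (by simp)
  have hl2 : ∀ k ∈ l2, k < s := by
    rw [List.pairwise_cons, List.pairwise_append, List.pairwise_cons] at hsort
    exact hsort.2.2.1.1
  have hk : ∀ k, s < k → k < n → ¬ lam ∣ k := by
    intro k h1 h2
    have : k ∈ (List.range (n + 1)).reverse := by simp; omega
    rw [h] at this
    simp only [List.mem_cons, List.mem_append] at this
    rcases this with h3 | h3 | h3 | h3
    · omega
    · exact hl k h3
    · omega
    · have := hl2 k h3; omega
  obtain ⟨c, rfl⟩ := hs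
  have hle : lam * ((n - 1) / lam) ≤ n - 1 := Nat.mul_div_le _ _
  have hc : c ≤ (n - 1) / lam := by
    rw [Nat.le_div_iff_mul_le (by omega)]
    rw [mul_comm]; omega
  have hc' : lam * c ≤ lam * ((n - 1) / lam) := Nat.mul_le_mul_left _ hc
  by_contra hne
  exact hk (lam * ((n - 1) / lam)) (by omega) (by omega) (dvd_mul_right _ _)

theorem aux_dropUntil {ι : Type*} [DecidableEq ι] {T : SimpleGraph ι} (hT : T.IsTree) {r v w : ι}
    (p : T.Walk v r) (hp : p.IsPath) (q : T.Walk w r) (hq : q.IsPath) (hw : w ∈ p.support) :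
    p.dropUntil w hw = q :=
  (hT.existsUnique_path w r).unique (hp.dropUntil hw) hq

theorem stmt4 {V ι : Type*} [Fintype V] [Fintype ι]
    (G : SimpleGraph V) (T : SimpleGraph ι) (B : ι → Set V)
    (hTD : IsTreeDecomp G T B)
    (r : ι)
    -- the level of a node: the number of edges on the (unique) path to the root
    (lvl : ι → ℕ)
    (hlvl : ∀ (v : ι) (p : T.Walk v r), p.IsPath → p.length = lvl v)
    -- the depth of the rooted decomposition
    (d : ℕ) (hd : ∀ v, lvl v ≤ d) (hde : ∃ v, lvl v = d)
    -- the maximum bag size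
    (m : ℕ) (hm : m = Finset.univ.sup fun w => (B w).ncard)
    (lam : ℕ) (hlam1 : 1 ≤ lam) (hlamd : lam ≤ d)
    -- `syn v` is the synchronization ancestor of `v ≠ r`: the first node after `v`
    -- on the path from `v` to `r` whose level is divisible by `lam`
    (syn : ι → ι)
    (hsyn : ∀ v, v ≠ r → ∀ p : T.Walk v r, p.IsPath →
      ∃ l₁ l₂ : List ι, p.support = v :: (l₁ ++ syn v :: l₂) ∧
        lam ∣ lvl (syn v) ∧ ∀ w ∈ l₁, ¬ lam ∣ lvl w)
    -- the highway decomposition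
    (B' : ι → Set V)
    (hB'r : B' r = B r)
    (hB' : ∀ v, v ≠ r → ∀ pr : T.Walk v r, pr.IsPath → ∀ ps : T.Walk v (syn v), ps.IsPath →
      B' v = ⋃ w ∈ {w : ι | w ∈ pr.support ∧ (w ∈ ps.support ∨ lam ∣ lvl w)}, B w) :
    IsTreeDecomp G T B' ∧ ∀ v, (B' v).ncard ≤ (lam + d / lam + 2) * m := by
  classical
  have hT := hTD.isTree
  have hpi : ∀ v, ∃ p : T.Walk v r, p.IsPath := fun v => (hT.existsUnique_path v r).exists
  choose π hπ using hpi
  have huniq : ∀ {a b : ι} (p q : T.Walk a b), p.IsPath → q.IsPath → p = q :=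
    fun p q hp hq => (hT.existsUnique_path _ _).unique hp hq
  have hmap : ∀ v, (π v).support.map lvl = (List.range (lvl v + 1)).reverse :=
    fun v => aux_levels hlvl v (π v) (hπ v)
  have hle : ∀ v w, w ∈ (π v).support → lvl w ≤ lvl v := by
    intro v w hw
    have : lvl w ∈ (π v).support.map lvl := List.mem_map_of_mem hw
    rw [hmap] at this
    simp at this
    omega
  have hinj : ∀ v w w', w ∈ (π v).support → w' ∈ (π v).support → lvl w = lvl w' → w = w' := by
    intro v w w' hw hw' h
    have hnd : ((π v).support.map lvl).Nodup := by
      rw [hmap]; simpa using List.nodup_range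
    exact List.inj_on_of_nodup_map hnd hw hw' h
  have hsplit : ∀ v w (hw : w ∈ (π v).support) (q : T.Walk v w), q.IsPath →
      π v = q.append (π w) := by
    intro v w hw q hq
    rw [← (π v).take_spec hw, huniq _ _ ((hπ v).takeUntil hw) hq,
      huniq _ _ ((hπ v).dropUntil hw) (hπ w)]
  have htrans : ∀ v w (hw : w ∈ (π v).support) (q : T.Walk v w), q.IsPath →
      ∀ u ∈ q.support, u ∈ (π v).support ∧ w ∈ (π u).support := by
    intro v w hw q hq u hu
    have h1 := hsplit v w hw q hq
    have hp := hπ v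
    rw [h1, ← q.take_spec hu, ← Walk.append_assoc] at hp
    have h2 := hp.of_append_right
    refine ⟨by rw [h1, Walk.mem_support_append_iff]; exact Or.inl hu, ?_⟩
    rw [huniq _ _ (hπ u) h2, Walk.mem_support_append_iff]
    exact Or.inr (Walk.start_mem_support _)
  have hlr : lvl r = 0 := by
    have := hlvl r Walk.nil Walk.IsPath.nil
    simpa using this.symm
  -- uniform description of the new bags
  have hchar : ∀ v x, x ∈ B' v ↔ ∃ w ∈ (π v).support,
      (lam * ((lvl v - 1) / lam) ≤ lvl w ∨ lam ∣ lvl w) ∧ x ∈ B w := by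
    intro v x
    by_cases hv : v = r
    · subst hv
      have : π v = Walk.nil := huniq _ _ (hπ v) Walk.IsPath.nil
      rw [hB'r, this]
      simp [hlr]
    · obtain ⟨l₁, l₂, hs, hdvd, hl⟩ := hsyn v hv (π v) (hπ v)
      have hsm : syn v ∈ (π v).support := by rw [hs]; simp
      have hlev : lvl (syn v) = lam * ((lvl v - 1) / lam) := by
        apply aux_syn _ _ _ hlam1 (l₁.map lvl) (l₂.map lvl) _ hdvd
        · simpa using hl
        · rw [← hmap, hs]; simp
      obtain ⟨ps, hps⟩ := (hT.existsUnique_path v (syn v)).exists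
      rw [hB' v hv (π v) (hπ v) ps hps, ← hlev]
      simp only [Set.mem_iUnion, Set.mem_setOf_eq, exists_prop, and_assoc]
      refine exists_congr fun w => and_congr_right fun hw => and_congr_left fun _ => ?_
      refine or_congr_left ?_
      constructor
      · intro h
        exact hle _ _ (htrans v (syn v) hsm ps hps w h).2
      · intro h
        have h1 := hsplit v (syn v) hsm ps hps
        have hw' := hw
        rw [h1, Walk.mem_support_append_iff] at hw'
        rcases hw' with h2 | h2
        · exact h2
        · have := hinj v w (syn v) hw hsm (le_antisymm (hle _ _ h2) h)
          rw [this]; exact Walk.end_mem_support _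
  have hsub : ∀ v x, x ∈ B v → x ∈ B' v := by
    intro v x hx
    rw [hchar]
    refine ⟨v, Walk.start_mem_support _, Or.inl ?_, hx⟩
    exact (Nat.mul_div_le _ _).trans (Nat.sub_le _ _)
  -- every node whose new bag contains `x` is joined to an old one
  have hjoin : ∀ v x, x ∈ B' v → ∃ w, x ∈ B w ∧ ∃ q : T.Walk v w, ∀ u ∈ q.support, x ∈ B' u := by
    intro v x hx
    obtain ⟨w, hw, hc, hxw⟩ := (hchar v x).1 hx
    refine ⟨w, hxw, (π v).takeUntil w hw, ?_⟩
    intro u hu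
    obtain ⟨h1, h2⟩ := htrans v w hw _ ((hπ v).takeUntil hw) u hu
    rw [hchar]
    refine ⟨w, h2, hc.imp_left fun h => le_trans ?_ h, hxw⟩
    exact Nat.mul_le_mul_left _ (Nat.div_le_div_right (Nat.sub_le_sub_right (hle _ _ h1) 1))
  refine ⟨⟨hT, ?_, ?_, ?_⟩, ?_⟩
  · intro v
    obtain ⟨i, hi⟩ := hTD.exists_bag v
    exact ⟨i, hsub _ _ hi⟩
  · intro u v h
    obtain ⟨i, h1, h2⟩ := hTD.edge_bag h
    exact ⟨i, hsub _ _ h1, hsub _ _ h2⟩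
  · intro x i j hi hj p hp k hk
    obtain ⟨w, hw, q, hq⟩ := hjoin i x hi
    obtain ⟨w', hw', q', hq'⟩ := hjoin j x hj
    obtain ⟨c, hc⟩ := (hT.existsUnique_path w w').exists
    have hpe : p = ((q.append c).append q'.reverse).bypass :=
      huniq _ _ hp (Walk.bypass_isPath _)
    rw [hpe] at hk
    have hk' := Walk.support_bypass_subset _ hk
    rw [Walk.mem_support_append_iff, Walk.mem_support_append_iff, Walk.support_reverse,
      List.mem_reverse] at hk'
    rcases hk' with (h | h) | h
    · exact hq k h
    · exact hsub _ _ (hTD.bag_connected x w w' hw hw' c hc k h)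
    · exact hq' k h
  · intro v
    let S : Finset ι := Finset.univ.filter fun w => w ∈ (π v).support ∧
      (lam * ((lvl v - 1) / lam) ≤ lvl w ∨ lam ∣ lvl w)
    have hBS : B' v = ⋃ w ∈ S, B w := by
      ext x
      rw [hchar]
      simp [S, and_assoc]
    have hS : S.card ≤ lam + d / lam + 2 := by
      have h1 : S.card ≤ (Finset.Icc (lvl v - lam) (lvl v) ∪
          (Finset.range (d / lam + 1)).image (fun k => lam * k)).card := by
        apply Finset.card_le_card_of_injOn lvl
        · intro w hw
          simp only [S, Finset.coe_filter, Finset.mem_univ, true_and, Set.mem_setOf_eq] at hw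
          obtain ⟨hw, h | h⟩ := hw
          · apply Finset.mem_coe.2
            apply Finset.mem_union_left
            rw [Finset.mem_Icc]
            refine ⟨?_, hle _ _ hw⟩
            have h3 := Nat.div_add_mod (lvl v - 1) lam
            have h4 := Nat.mod_lt (lvl v - 1) (show lam > 0 by omega)
            omega
          · apply Finset.mem_coe.2
            apply Finset.mem_union_right
            obtain ⟨c, hc⟩ := h
            rw [Finset.mem_image]
            refine ⟨c, ?_, hc.symm⟩
            rw [Finset.mem_range, Nat.lt_succ_iff, Nat.le_div_iff_mul_le (by omega), mul_comm, ← hc]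
            exact hd w
        · intro w hw w' hw' h
          simp only [S, Finset.coe_filter, Finset.mem_univ, true_and, Set.mem_setOf_eq] at hw hw'
          exact hinj v w w' hw.1 hw'.1 h
      have h2 := Finset.card_union_le (Finset.Icc (lvl v - lam) (lvl v))
          ((Finset.range (d / lam + 1)).image (fun k => lam * k))
      have h3 := Finset.card_image_le (s := Finset.range (d / lam + 1)) (f := fun k => lam * k)
      rw [Finset.card_range] at h3
      rw [Nat.card_Icc] at h2
      omega
    have hb : ∀ w, (B w).ncard ≤ m := by
      intro w
      rw [hm]
      exact Finset.le_sup (f := fun w => (B w).ncard) (Finset.mem_univ w)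
    calc (B' v).ncard ≤ ∑ w ∈ S, (B w).ncard := by
          rw [hBS]; exact Finset.set_ncard_biUnion_le _ _
      _ ≤ S.card * m := by
          simpa using Finset.sum_le_card_nsmul S _ m (fun w _ => hb w)
      _ ≤ _ := Nat.mul_le_mul_right _ hS
end

section
/- Let (T, B) be a tree decomposition of a graph G rooted at r, let q ≥ 1, and let m_0 < m_1 < … < m_{q−1} be positive integers with m_j dividing m_{j+1} for all 0 ≤ j ≤ q−2. Then the super-highway decomposition (T, B') is a tree decomposition of G and has combinatorial diameter at most 2q + 1. -/
/-!
STATEMENT 6: Let (T, B) be a tree decomposition of a graph G rooted at r, let q ≥ 1,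
and let m_0 < m_1 < … < m_{q−1} be positive integers with m_j dividing m_{j+1} for all
0 ≤ j ≤ q−2. Then the super-highway decomposition (T, B') is a tree decomposition of G
and has combinatorial diameter at most 2q + 1.
-/

open SimpleGraph

namespace SHW

/-- The first `k` nodes on the upward path from `v`. -/
def dn {ι : Type*} (par : ι → ι) (v : ι) (k : ℕ) : List ι :=
  (List.range k).map (fun i => par^[i] v)

lemma dn_zero {ι : Type*} (par : ι → ι) (v : ι) : dn par v 0 = [] := rfl

lemma dn_succ {ι : Type*} (par : ι → ι) (v : ι) (k : ℕ) :
    dn par v (k+1) = v :: dn par (par v) k := by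
  simp [dn, List.range_succ_eq_map, List.map_map, Function.comp_def]

lemma dn_succ' {ι : Type*} (par : ι → ι) (v : ι) (k : ℕ) :
    dn par v (k+1) = dn par v k ++ [par^[k] v] := by
  simp [dn, List.range_succ]

lemma dn_add {ι : Type*} (par : ι → ι) (v : ι) (j k : ℕ) :
    dn par v (j+k) = dn par v j ++ dn par (par^[j] v) k := by
  induction j generalizing v with
  | zero => simp [dn_zero]
  | succ j ih =>
    rw [show j + 1 + k = (j + k) + 1 by omega, dn_succ, ih, dn_succ]
    simp

lemma mem_dn {ι : Type*} {par : ι → ι} {v x : ι} {k : ℕ} :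
    x ∈ dn par v k ↔ ∃ i < k, par^[i] v = x := by
  simp [dn, eq_comm]

lemma split_iff {ι : Type*} (f : ℕ → ι) (n : ℕ) (w : ι) (P : ι → Prop) :
    (∃ l₁ l₂ : List ι, (List.range n).map f = l₁ ++ w :: l₂ ∧ ∀ u ∈ l₁, P u) ↔
      ∃ k < n, f k = w ∧ ∀ i < k, P (f i) := by
  constructor
  · rintro ⟨l₁, l₂, h, hP⟩
    have hlen : n = l₁.length + (l₂.length + 1) := by
      have := congrArg List.length h
      simpa using this
    refine ⟨l₁.length, by omega, ?_, ?_⟩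
    · have := congrArg (fun l => l[l₁.length]?) h
      simpa [show l₁.length < n by omega] using this
    · intro i hi
      have := congrArg (fun l => l[i]?) h
      simp [show i < n by omega, List.getElem?_append_left hi, List.getElem?_eq_getElem hi] at this
      rw [this]
      exact hP _ (List.getElem_mem hi)
  · rintro ⟨k, hk, rfl, hP⟩
    obtain ⟨d, rfl⟩ : ∃ d, n = k + (d + 1) := ⟨n - k - 1, by omega⟩
    refine ⟨(List.range k).map f, (List.range d).map (fun i => f (k + (i+1))), ?_, ?_⟩
    · rw [List.range_add, List.range_succ_eq_map]
      simp [Function.comp_def]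
    · intro u hu
      simp at hu
      obtain ⟨i, hi, rfl⟩ := hu
      exact hP i hi

/-- Simplification. -/
def Red {V ι : Type*} (B : ι → Set V) : List ι → List ι → Prop :=
  Relation.ReflTransGen (SimpStep B)

lemma Red.ctx {V ι : Type*} {B : ι → Set V} {l l' : List ι} (h : Red B l l') (a b : List ι) :
    Red B (a ++ l ++ b) (a ++ l' ++ b) := by
  refine Relation.ReflTransGen.lift (r := SimpStep B) (fun l => a ++ l ++ b) ?_ _ _ h
  rintro _ _ ⟨l₁, l₂, u, x, w, rfl, rfl, h⟩
  exact ⟨a ++ l₁, l₂ ++ b, u, x, w, by simp, by simp, h⟩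

lemma Red.trans {V ι : Type*} {B : ι → Set V} {l l' l'' : List ι} (h : Red B l l')
    (h' : Red B l' l'') : Red B l l'' := Relation.ReflTransGen.trans h h'

lemma Red.rev {V ι : Type*} {B : ι → Set V} {l l' : List ι} (h : Red B l l') :
    Red B l.reverse l'.reverse := by
  refine Relation.ReflTransGen.lift (r := SimpStep B) (fun l : List ι => l.reverse) ?_ _ _ h
  rintro _ _ ⟨l₁, l₂, u, x, w, rfl, rfl, h⟩
  exact ⟨l₂.reverse, l₁.reverse, w, x, u, by simp, by simp, h.symm⟩

/-- Index `k` is a record on the upward path from `v`. -/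
def Rec {ι : Type*} (par : ι → ι) (lvl : ι → ℕ) (pi : ι → ℤ) (v : ι) (k : ℕ) : Prop :=
  1 ≤ k ∧ k ≤ lvl v ∧ ∀ i, 1 ≤ i → i < k → pi (par^[i] v) ≤ pi (par^[k] v)

/-- Abstract rooted tree data. -/
structure Data {V ι : Type*} (r : ι) (par : ι → ι) (lvl : ι → ℕ) (pi : ι → ℤ)
    (B B' : ι → Set V) : Prop where
  lr : lvl r = 0
  ls : ∀ v, v ≠ r → lvl v = lvl (par v) + 1
  conn : ∀ v x i j k, i ≤ j → j ≤ k → k ≤ lvl v → x ∈ B (par^[i] v) → x ∈ B (par^[k] v) →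
    x ∈ B (par^[j] v)
  bag : ∀ v x, x ∈ B' v ↔ x ∈ B v ∨ ∃ k, Rec par lvl pi v k ∧ x ∈ B (par^[k] v)

section
variable {V ι : Type*} {r : ι} {par : ι → ι} {lvl : ι → ℕ} {pi : ι → ℤ} {B B' : ι → Set V}

lemma lvl_iter (lr : lvl r = 0) (ls : ∀ v, v ≠ r → lvl v = lvl (par v) + 1) (v : ι) (k : ℕ)
    (hk : k ≤ lvl v) : lvl (par^[k] v) + k = lvl v := by
  induction k generalizing v with
  | zero => simp
  | succ k ih =>
    have hv : v ≠ r := by rintro rfl; omega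
    have := ls v hv
    have := ih (par v) (by omega)
    rw [Function.iterate_succ_apply]; omega

lemma rec_par {u : ι} {k : ℕ} (lr : lvl r = 0) (ls : ∀ v, v ≠ r → lvl v = lvl (par v) + 1)
    (h : Rec par lvl pi u (k+1)) (hk : 1 ≤ k) :
    Rec par lvl pi (par u) k := by
  obtain ⟨h1, h2, h3⟩ := h
  have hv : u ≠ r := by rintro rfl; omega
  have := ls u hv
  refine ⟨hk, by omega, fun i hi hik => ?_⟩
  have := h3 (i+1) (by omega) (by omega)
  simpa using this

lemma jump_sub (D : Data r par lvl pi B B') {u : ι} {k : ℕ} (hk : 1 ≤ k)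
    (h : Rec par lvl pi u (k+1)) : B' (par u) ∩ B' (par^[k+1] u) ⊆ B' u := by
  have hR := h
  obtain ⟨h1, h2, h3⟩ := h
  have hv : u ≠ r := by rintro rfl; have := D.lr; omega
  have hl := D.ls u hv
  have hlk := lvl_iter D.lr D.ls u (k+1) h2
  rintro a ⟨ha, hb⟩
  have ha' : ∃ i, 1 ≤ i ∧ i ≤ lvl u ∧ a ∈ B (par^[i] u) ∧
      (i = 1 ∨ ∃ i', i = i' + 1 ∧ Rec par lvl pi (par u) i') := by
    rcases (D.bag _ _).1 ha with ha | ⟨i, hi, ha⟩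
    · exact ⟨1, le_rfl, by omega, by simpa using ha, Or.inl rfl⟩
    · exact ⟨i+1, by omega, by have := hi.2.1; omega, by simpa using ha, Or.inr ⟨i, rfl, hi⟩⟩
  have hb' : ∃ j, k + 1 ≤ j ∧ j ≤ lvl u ∧ a ∈ B (par^[j] u) := by
    rcases (D.bag _ _).1 hb with hb | ⟨i, hi, hb⟩
    · exact ⟨k+1, le_rfl, by omega, hb⟩
    · refine ⟨i + (k+1), by omega, by have := hi.2.1; omega, ?_⟩
      rwa [Function.iterate_add_apply]
  obtain ⟨i, hi1, hi2, hai, hi⟩ := ha'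
  obtain ⟨j, hj1, hj2, haj⟩ := hb'
  rw [D.bag]
  right
  by_cases hik : i ≤ k + 1
  · exact ⟨k+1, hR, D.conn u a i (k+1) j hik hj1 hj2 hai haj⟩
  · rcases hi with rfl | ⟨i', rfl, hi'⟩
    · omega
    · refine ⟨i'+1, ⟨by omega, hi2, fun n hn hn' => ?_⟩, hai⟩
      have key : ∀ n, 2 ≤ n → n < i' + 1 → pi (par^[n] u) ≤ pi (par^[i'+1] u) := by
        intro n hn hn'
        obtain ⟨n, rfl⟩ : ∃ n', n = n' + 1 := ⟨n - 1, by omega⟩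
        have := hi'.2.2 n (by omega) (by omega)
        simpa using this
      by_cases hn1 : n = 1
      · subst hn1
        exact (h3 1 le_rfl (by omega)).trans (key (k+1) (by omega) (by omega))
      · exact key n (by omega) hn'

lemma jump_red (D : Data r par lvl pi B B') {u : ι} {k : ℕ} (hk : 1 ≤ k)
    (h : Rec par lvl pi u k) : Red B' (dn par u (k+1)) [u, par^[k] u] := by
  induction k generalizing u with
  | zero => omega
  | succ k ih =>
    by_cases hk1 : k = 0
    · subst hk1
      exact Relation.ReflTransGen.refl
    · have := (ih (by omega) (rec_par D.lr D.ls h (by omega))).ctx [u] []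
      rw [dn_succ]
      simp only [List.append_nil, List.singleton_append] at this
      refine this.tail ⟨[], [], u, par u, par^[k+1] u, by simp, by simp, Or.inl ?_⟩
      exact jump_sub D (by omega) h

lemma last_max (f : ℕ → ℤ) (k : ℕ) (hk : 1 ≤ k) :
    ∃ j, 1 ≤ j ∧ j ≤ k ∧ (∀ i, 1 ≤ i → i ≤ j → f i ≤ f j) ∧ ∀ i, j < i → i ≤ k → f i < f j := by
  induction k, hk using Nat.le_induction with
  | base => exact ⟨1, le_rfl, le_rfl, fun i h1 h2 => by rw [show i = 1 by omega],
      fun i _ _ => by omega⟩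
  | succ k hk ih =>
    obtain ⟨j, h1, h2, h3, h4⟩ := ih
    by_cases h : f j ≤ f (k+1)
    · refine ⟨k+1, by omega, le_rfl, fun i hi hi' => ?_, fun i _ _ => by omega⟩
      by_cases hik : i = k+1
      · rw [hik]
      by_cases hij : i ≤ j
      · exact (h3 i hi hij).trans h
      · exact (h4 i (by omega) (by omega)).le.trans h
    · refine ⟨j, h1, by omega, h3, fun i hi hi' => ?_⟩
      by_cases hik : i = k+1
      · rw [hik]; omega
      · exact h4 i hi (by omega)

lemma bag_sub (D : Data r par lvl pi B B') (hpi : ∀ v, -1 ≤ pi v) {y : ι} {k : ℕ} (hk : 1 ≤ k)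
    (hkl : k ≤ lvl y) (h : ∀ i, 1 ≤ i → i ≤ k → pi (par^[i] y) ≤ -1) :
    B' (par^[k] y) ⊆ B' y := by
  have hl := lvl_iter D.lr D.ls y k hkl
  intro x hx
  rw [D.bag]; right
  rcases (D.bag _ _).1 hx with hx | ⟨i, hi, hx⟩
  · exact ⟨k, ⟨hk, hkl, fun i hi hik => (h i hi hik.le).trans (hpi _)⟩, hx⟩
  · rw [← Function.iterate_add_apply] at hx
    refine ⟨i + k, ⟨by omega, by have := hi.2.1; omega, fun n hn hn' => ?_⟩, hx⟩
    by_cases hnk : n ≤ k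
    · exact (h n hn hnk).trans (hpi _)
    · obtain ⟨n, rfl⟩ : ∃ n', n = n' + k := ⟨n - k, by omega⟩
      have := hi.2.2 n (by omega) (by omega)
      simpa only [← Function.iterate_add_apply] using this

lemma chain_red (D : Data r par lvl pi B B') (hpi : ∀ v, -1 ≤ pi v) (M : ℕ) (v : ι) (k : ℕ)
    (hk : 1 ≤ k) (hkl : k ≤ lvl v) (hM : ∀ i, 1 ≤ i → i ≤ k → pi (par^[i] v) + 1 ≤ M) :
    ∃ (l : List ι) (y : ι), Red B' (dn par v k ++ [par^[k] v]) (l ++ [y, par^[k] v]) ∧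
      (l.length : ℤ) ≤ M - (pi (par^[k] v) + 1) ∧
      (pi (par^[k] v) = -1 → B' (par^[k] v) ⊆ B' y) := by
  induction M generalizing v k with
  | zero =>
    have hR : Rec par lvl pi v k := ⟨hk, hkl, fun i hi hik => by
      have := hM i hi hik.le
      have := hpi (par^[k] v)
      push_cast at *; omega⟩
    refine ⟨[], v, ?_, ?_, fun h => ?_⟩
    · rw [← dn_succ']; exact jump_red D hk hR
    · have := hM k hk le_rfl
      simp at *; omega
    · refine bag_sub D hpi hk hkl fun i hi hik => ?_
      have := hM i hi hik
      push_cast at this; omega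
  | succ M ih =>
    obtain ⟨j, h1, h2, h3, h4⟩ := last_max (fun i => pi (par^[i] v)) k hk
    have hR : Rec par lvl pi v j := ⟨h1, by omega, fun i hi hik => h3 i hi hik.le⟩
    have hj := jump_red D h1 hR
    by_cases hjk : j = k
    · subst hjk
      refine ⟨[], v, ?_, ?_, fun h => ?_⟩
      · rw [← dn_succ']; exact hj
      · have := hM j hk le_rfl
        push_cast at *
        simp; omega
      · refine bag_sub D hpi hk hkl fun i hi hik => ?_
        have := h3 i hi hik
        omega
    · obtain ⟨d, rfl⟩ : ∃ d, k = j + (d + 1) := ⟨k - j - 1, by omega⟩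
      have hl := lvl_iter D.lr D.ls v j (by omega)
      have e : ∀ n, par^[n] (par^[j] v) = par^[j + n] v := by
        intro n; rw [← Function.iterate_add_apply, add_comm]
      obtain ⟨l, y, hr, hlen, hsub⟩ := ih (par^[j] v) (d+1) (by omega) (by omega) (by
        intro i hi hid
        rw [e]
        have := h4 (j+i) (by omega) (by omega)
        have := hM j h1 (by omega)
        push_cast at *; omega)
      rw [e] at hr hlen hsub
      refine ⟨v :: l, y, ?_, by push_cast; simp; omega, hsub⟩
      have a1 := hj.ctx [] (dn par (par (par^[j] v)) d ++ [par^[j + (d+1)] v])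
      have a2 := hr.ctx [v] []
      refine Red.trans (l' := [v] ++ (dn par (par^[j] v) (d+1) ++ [par^[j + (d+1)] v]) ++ []) ?_ ?_
      · convert a1 using 1
        · rw [dn_add, dn_succ' par v j, dn_succ]; simp
        · rw [dn_succ]; simp
      · convert a2 using 1
        simp

lemma final_red (D : Data r par lvl pi B B') (hpi : ∀ v, -1 ≤ pi v) (q : ℕ) (hq : 1 ≤ q)
    (hpq : ∀ v, pi v + 1 ≤ q) (s t : ι) (k l : ℕ) (hk : k ≤ lvl s) (hl : l ≤ lvl t)
    (h : par^[k] s = par^[l] t) :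
    ∃ L, Red B' (dn par s k ++ par^[k] s :: (dn par t l).reverse) L ∧ L.length ≤ 2 * q + 1 + 1 := by
  have hpa := hpi (par^[k] s)
  by_cases hk0 : k = 0
  · by_cases hl0 : l = 0
    · subst hk0 hl0
      exact ⟨_, Relation.ReflTransGen.refl, by simp [dn_zero]⟩
    · obtain ⟨l', y, hr, hlen, -⟩ := chain_red D hpi q t l (by omega) hl (fun _ _ _ => hpq _)
      rw [← h] at hr hlen
      refine ⟨_, by simpa [hk0, dn_zero] using hr.rev, ?_⟩
      simp [hk0] at *; omega
  · obtain ⟨l₁, y₁, hr₁, hlen₁, hs⟩ := chain_red D hpi q s k (by omega) hk (fun _ _ _ => hpq _)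
    by_cases hl0 : l = 0
    · refine ⟨_, by simpa [hl0, dn_zero] using hr₁, ?_⟩
      simp at *; omega
    obtain ⟨l₂, y₂, hr₂, hlen₂, -⟩ := chain_red D hpi q t l (by omega) hl (fun _ _ _ => hpq _)
    rw [← h] at hr₂ hlen₂
    have a1 := hr₁.ctx [] (dn par t l).reverse
    have a2 := hr₂.rev.ctx (l₁ ++ [y₁]) []
    have a3 : Red B' (dn par s k ++ par^[k] s :: (dn par t l).reverse)
        (l₁ ++ y₁ :: par^[k] s :: y₂ :: l₂.reverse) := by
      refine Red.trans (l' := l₁ ++ y₁ :: par^[k] s :: (dn par t l).reverse) ?_ ?_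
      · simpa using a1
      · simpa using a2
    by_cases hp : pi (par^[k] s) = -1
    · refine ⟨l₁ ++ y₁ :: y₂ :: l₂.reverse, a3.tail ⟨l₁, l₂.reverse, y₁, par^[k] s, y₂, rfl, rfl,
        Or.inl fun x hx => hs hp hx.1⟩, ?_⟩
      simp at *; omega
    · refine ⟨_, a3, ?_⟩
      simp at *; omega

lemma up_walk {T : SimpleGraph ι} (hadj : ∀ v, v ≠ r → T.Adj v (par v))
    (lr : lvl r = 0) (ls : ∀ v, v ≠ r → lvl v = lvl (par v) + 1) (v : ι) (k : ℕ)
    (hk : k ≤ lvl v) : ∃ p : T.Walk v (par^[k] v), p.support = dn par v (k+1) := by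
  induction k generalizing v with
  | zero => exact ⟨.nil, by simp [dn_succ, dn_zero]⟩
  | succ k ih =>
    have hv : v ≠ r := by rintro rfl; omega
    have := ls v hv
    obtain ⟨p, hp⟩ := ih (par v) (by omega)
    exact ⟨.cons (hadj v hv) p, by rw [dn_succ, ← hp]; rfl⟩

lemma dn_nodup (lr : lvl r = 0) (ls : ∀ v, v ≠ r → lvl v = lvl (par v) + 1) (v : ι) (k : ℕ)
    (hk : k ≤ lvl v + 1) : (dn par v k).Nodup := by
  refine List.Nodup.map_on ?_ List.nodup_range
  intro i hi j hj h
  simp at hi hj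
  have h1 := lvl_iter lr ls v i (by omega)
  have h2 := lvl_iter lr ls v j (by omega)
  rw [h] at h1; omega

lemma iter_lvl (lr : lvl r = 0) (ls : ∀ v, v ≠ r → lvl v = lvl (par v) + 1) (v : ι) :
    par^[lvl v] v = r := by
  have := lvl_iter lr ls v (lvl v) le_rfl
  by_contra h
  have := ls _ h
  omega

lemma path_form {T : SimpleGraph ι} (hT : T.IsTree) (hadj : ∀ v, v ≠ r → T.Adj v (par v))
    (lr : lvl r = 0) (ls : ∀ v, v ≠ r → lvl v = lvl (par v) + 1) (s t : ι)
    (p : T.Walk s t) (hp : p.IsPath) : ∃ k l, k ≤ lvl s ∧ l ≤ lvl t ∧ par^[k] s = par^[l] t ∧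
      p.support = dn par s k ++ par^[k] s :: (dn par t l).reverse := by
  classical
  have hex : ∃ k, k ≤ lvl s ∧ ∃ l, l ≤ lvl t ∧ par^[k] s = par^[l] t :=
    ⟨lvl s, le_rfl, lvl t, le_rfl, by rw [iter_lvl lr ls, iter_lvl lr ls]⟩
  obtain ⟨hk, l, hl, h⟩ := Nat.find_spec hex
  have hmin := fun i (hi : i < Nat.find hex) => Nat.find_min hex hi
  generalize Nat.find hex = k at *
  obtain ⟨p₁, h₁⟩ := up_walk (T := T) hadj lr ls s k hk
  obtain ⟨p₂, h₂⟩ := up_walk (T := T) hadj lr ls t l hl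
  refine ⟨k, l, hk, hl, h, ?_⟩
  let w : T.Walk s t := p₁.append (p₂.reverse.copy h.symm rfl)
  have hw : w.support = dn par s k ++ par^[k] s :: (dn par t l).reverse := by
    simp only [w, SimpleGraph.Walk.support_append, SimpleGraph.Walk.support_copy,
      SimpleGraph.Walk.support_reverse, h₁, h₂]
    rw [dn_succ', dn_succ']
    simp
  have hwp : w.IsPath := by
    rw [SimpleGraph.Walk.isPath_def, hw]
    have n1 := dn_nodup lr ls s k (by omega)
    have n2 := dn_nodup lr ls t (l+1) (by omega)
    rw [dn_succ', ← h] at n2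
    refine List.Nodup.append n1 (by simpa using List.nodup_reverse.2 n2) ?_
    intro x hx hx'
    obtain ⟨i, hi, rfl⟩ := mem_dn.1 hx
    have : par^[i] s ∈ dn par t (l+1) := by
      rw [dn_succ', ← h]
      simpa [or_comm] using hx'
    obtain ⟨j, hj, hj'⟩ := mem_dn.1 this
    exact hmin i hi ⟨by omega, j, by omega, hj'.symm⟩
  have := hT.IsAcyclic.path_unique ⟨p, hp⟩ ⟨w, hwp⟩
  rw [Subtype.mk.injEq] at this
  rw [this, hw]

/-- Joined by a walk inside the set. -/
def Jn (T : SimpleGraph ι) (C : ι → Prop) (i j : ι) : Prop :=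
  ∃ p : T.Walk i j, ∀ k ∈ p.support, C k

lemma Jn.symm {T : SimpleGraph ι} {C : ι → Prop} {i j : ι} (h : Jn T C i j) : Jn T C j i := by
  obtain ⟨p, hp⟩ := h
  exact ⟨p.reverse, by simpa using hp⟩

lemma Jn.trans {T : SimpleGraph ι} {C : ι → Prop} {i j k : ι} (h : Jn T C i j) (h' : Jn T C j k) :
    Jn T C i k := by
  obtain ⟨p, hp⟩ := h
  obtain ⟨p', hp'⟩ := h'
  refine ⟨p.append p', fun k hk => ?_⟩
  rw [SimpleGraph.Walk.mem_support_append_iff] at hk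
  exact hk.elim (hp k) (hp' k)

lemma Jn.path {T : SimpleGraph ι} (hT : T.IsTree) {C : ι → Prop} {i j : ι} (h : Jn T C i j)
    (p : T.Walk i j) (hp : p.IsPath) : ∀ k ∈ p.support, C k := by
  classical
  obtain ⟨p', hp'⟩ := h
  have := hT.IsAcyclic.path_unique ⟨p, hp⟩ ⟨p'.bypass, p'.bypass_isPath⟩
  rw [Subtype.mk.injEq] at this
  intro k hk
  rw [this] at hk
  exact hp' k (p'.support_bypass_subset hk)

end
end SHW

theorem stmt6 {V ι : Type*} [Fintype V] [Fintype ι]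
    (G : SimpleGraph V) (T : SimpleGraph ι) (B : ι → Set V)
    (hTD : IsTreeDecomp G T B)
    (r : ι) (par : ι → ι) (hpar : IsParentMap T r par)
    -- the level of a node: the number of edges on the (unique) path to the root
    (lvl : ι → ℕ)
    (hlvl : ∀ (v : ι) (p : T.Walk v r), p.IsPath → p.length = lvl v)
    -- the moduli m_0 < m_1 < … < m_{q-1}, positive, each dividing the next
    (q : ℕ) (hq : 1 ≤ q) (m : Fin q → ℕ)
    (hmpos : ∀ j, 0 < m j)
    (hmmono : ∀ j k : Fin q, j < k → m j < m k)
    (hmdvd : ∀ (j : ℕ) (h : j + 1 < q), m ⟨j, by omega⟩ ∣ m ⟨j + 1, h⟩)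
    -- the layer of a node: `π v = max { j | m j ∣ lvl v }`, or `-1` if no such `j`
    (pi : ι → ℤ)
    (hpi : ∀ v, (¬ m ⟨0, hq⟩ ∣ lvl v ∧ pi v = -1) ∨
      ∃ j : Fin q, m j ∣ lvl v ∧ pi v = (j : ℕ) ∧
        ∀ k : Fin q, m k ∣ lvl v → (k : ℕ) ≤ (j : ℕ))
    -- the super-highway decomposition
    (B' : ι → Set V)
    (hB'r : B' r = B r)
    (hB' : ∀ v, v ≠ r → ∀ pr : T.Walk (par v) r, pr.IsPath →
      B' v = B v ∪ ⋃ w ∈ {w : ι | ∃ l₁ l₂ : List ι,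
        pr.support = l₁ ++ w :: l₂ ∧ ∀ u ∈ l₁, pi u ≤ pi w}, B w) :
    IsTreeDecomp G T B' ∧ CombDiamLE T B' (2 * q + 1) := by
  classical
  have hT := hTD.isTree
  have hadj : ∀ v, v ≠ r → T.Adj v (par v) := fun v hv => (hpar v hv).1
  have hpath : ∀ v w : ι, ∃ p : T.Walk v w, p.IsPath := fun v w => by
    obtain ⟨p, hp, -⟩ := hT.existsUnique_path v w
    exact ⟨p, hp⟩
  have lr : lvl r = 0 := (hlvl r .nil (by simp)).symm
  have ls : ∀ v, v ≠ r → lvl v = lvl (par v) + 1 := by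
    intro v hv
    obtain ⟨p, hp⟩ := hpath (par v) r
    have h1 := hlvl _ p hp
    have h2 := hlvl v (.cons (hadj v hv) p) (hp.cons ((hpar v hv).2 p hp))
    rw [SimpleGraph.Walk.length_cons] at h2
    omega
  have hpi1 : ∀ v, -1 ≤ pi v := by
    intro v
    rcases hpi v with ⟨-, h⟩ | ⟨j, -, h, -⟩ <;> omega
  have hpiq : ∀ v, pi v + 1 ≤ q := by
    intro v
    rcases hpi v with ⟨-, h⟩ | ⟨j, -, h, -⟩
    · omega
    · have := j.2
      omega
  have hrec : ∀ v x, x ∈ B' v ↔ x ∈ B v ∨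
      ∃ k, SHW.Rec par lvl pi v k ∧ x ∈ B (par^[k] v) := by
    intro v x
    by_cases hv : v = r
    · subst hv
      rw [hB'r]
      constructor
      · exact Or.inl
      · rintro (h | ⟨k, hk, -⟩)
        · exact h
        · have h1 := hk.1
          have h2 := hk.2.1
          omega
    · obtain ⟨p, hp⟩ := hpath (par v) r
      have hsup : p.support = (List.range (lvl (par v) + 1)).map (fun i => par^[i] (par v)) := by
        obtain ⟨w, hw⟩ := SHW.up_walk (T := T) hadj lr ls (par v) _ le_rfl
        have he := SHW.iter_lvl lr ls (par v)
        have hwp : (w.copy rfl he).IsPath := by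
          rw [SimpleGraph.Walk.isPath_def, SimpleGraph.Walk.support_copy, hw]
          exact SHW.dn_nodup lr ls _ _ le_rfl
        have := hT.IsAcyclic.path_unique ⟨p, hp⟩ ⟨_, hwp⟩
        rw [Subtype.mk.injEq] at this
        rw [this, SimpleGraph.Walk.support_copy, hw, SHW.dn]
      rw [hB' v hv p hp, hsup]
      have hl := ls v hv
      simp only [Set.mem_union, Set.mem_iUnion, Set.mem_setOf_eq, exists_prop]
      refine or_congr Iff.rfl ?_
      constructor
      · rintro ⟨w, hw, hx⟩
        obtain ⟨k, hk, rfl, hki⟩ := (SHW.split_iff _ _ w (fun u => pi u ≤ pi w)).1 hw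
        refine ⟨k+1, ⟨by omega, by omega, fun i hi hik => ?_⟩, by simpa using hx⟩
        obtain ⟨i, rfl⟩ : ∃ i', i = i' + 1 := ⟨i - 1, by omega⟩
        simpa using hki i (by omega)
      · rintro ⟨k, ⟨h1, h2, h3⟩, hx⟩
        obtain ⟨k, rfl⟩ : ∃ k', k = k' + 1 := ⟨k - 1, by omega⟩
        refine ⟨_, (SHW.split_iff _ _ _ (fun u => pi u ≤ pi _)).2 ⟨k, by omega, rfl, fun i hi => ?_⟩,
          by simpa using hx⟩
        simpa using h3 (i+1) (by omega) (by omega)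
  have D : SHW.Data r par lvl pi B B' := by
    refine ⟨lr, ls, ?_, hrec⟩
    intro v x i j k hij hjk hk hi hk'
    have hli := SHW.lvl_iter lr ls v i (by omega)
    obtain ⟨d, rfl⟩ : ∃ d, k = d + i := ⟨k - i, by omega⟩
    obtain ⟨e, rfl⟩ : ∃ e, j = e + i := ⟨j - i, by omega⟩
    rw [Function.iterate_add_apply] at hk' ⊢
    obtain ⟨w, hw⟩ := SHW.up_walk (T := T) hadj lr ls (par^[i] v) d (by omega)
    refine hTD.bag_connected x _ _ hi hk' w ?_ _ ?_
    · rw [SimpleGraph.Walk.isPath_def, hw]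
      exact SHW.dn_nodup lr ls _ _ (by omega)
    · rw [hw]
      exact SHW.mem_dn.2 ⟨e, by omega, rfl⟩
  have hsub : ∀ i, B i ⊆ B' i := fun i x hx => (hrec i x).2 (Or.inl hx)
  refine ⟨⟨hT, ?_, ?_, ?_⟩, ?_⟩
  · intro v
    obtain ⟨i, hi⟩ := hTD.exists_bag v
    exact ⟨i, hsub i hi⟩
  · intro u v huv
    obtain ⟨i, hi, hi'⟩ := hTD.edge_bag huv
    exact ⟨i, hsub i hi, hsub i hi'⟩
  · intro x i j hi hj
    have key : ∀ i, x ∈ B' i → ∃ w, x ∈ B w ∧ SHW.Jn T (fun k => x ∈ B' k) i w := by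
      intro i hi
      rcases (hrec i x).1 hi with h | ⟨k, hk, h⟩
      · exact ⟨i, h, .nil, by simpa using hi⟩
      · refine ⟨_, h, ?_⟩
        obtain ⟨w, hw⟩ := SHW.up_walk (T := T) hadj lr ls i k hk.2.1
        refine ⟨w, fun y hy => ?_⟩
        rw [hw] at hy
        obtain ⟨n, hn, rfl⟩ := SHW.mem_dn.1 hy
        have hln := SHW.lvl_iter lr ls i n (by have := hk.2.1; omega)
        by_cases hnk : n = k
        · subst hnk
          exact hsub _ h
        · obtain ⟨d, rfl⟩ : ∃ d, k = d + n := ⟨k - n, by omega⟩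
          refine (hrec _ x).2 (Or.inr ⟨d, ⟨by omega, by have := hk.2.1; omega, ?_⟩, ?_⟩)
          · intro c hc hcd
            simpa only [← Function.iterate_add_apply] using hk.2.2 (c + n) (by omega) (by omega)
          · rwa [← Function.iterate_add_apply]
    obtain ⟨a, ha, hia⟩ := key i hi
    obtain ⟨b, hb, hjb⟩ := key j hj
    obtain ⟨p, hp⟩ := hpath a b
    have hab : SHW.Jn T (fun k => x ∈ B' k) a b :=
      ⟨p, fun k hk => hsub k (hTD.bag_connected x a b ha hb p hp k hk)⟩
    exact fun p hp => ((hia.trans hab).trans hjb.symm).path hT p hp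
  · intro s t p hp
    obtain ⟨k, l, hk, hl, h, hs⟩ := SHW.path_form hT hadj lr ls s t p hp
    rw [hs]
    exact SHW.final_red D hpi1 q hq hpiq s t k l hk hl h
end

section
/- For the sequential-sampling distribution A determined by bags B_1, …, B_ℓ and distributions μ_1, …, μ_ℓ, the marginal on each bag is correct: for every index i and every assignment g : B_i → {0,1}, Pr_{f ∼ A}[ f|_{B_i} = g ] = μ_i(g). -/
/-!
STATEMENT 7: For the sequential-sampling distribution A determined by bags B_1, …, B_ℓ
and distributions μ_1, …, μ_ℓ, the marginal on each bag is correct: for every index i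
and every assignment g : B_i → {0,1}, Pr_{f ∼ A}[ f|_{B_i} = g ] = μ_i(g).
-/

variable {V : Type*} [Fintype V] [DecidableEq V]

/-- Restriction of an assignment of `S'` to a subset `S ⊆ S'`. -/
def res {S S' : Finset V} (h : S ⊆ S') (f : ↥S' → Bool) : ↥S → Bool :=
  fun x => f ⟨x.1, h x.2⟩

/-- The marginal on assignments of `S ⊆ S'` of a distribution `μ` on assignments
of `S'`. -/
noncomputable def marg {S S' : Finset V} (h : S ⊆ S') (μ : (↥S' → Bool) → ℝ) :
    (↥S → Bool) → ℝ :=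
  fun g => ∑ f : ↥S' → Bool, if res h f = g then μ f else 0

/-- The sequential-sampling distribution on assignments of `B 0 ∪ … ∪ B (ℓ-1)`:
sample `f|_{B 0}` from `μ 0`; then, for `i = 1, …, ℓ-1` in order, sample
`f|_{B i \ B (i-1)}` from the conditional distribution of `μ i` given that it agrees
with the already-determined values on `B i ∩ B (i-1)`.  (Each step contributes the
conditional probability `μ i (f|_{B i}) / (marginal of μ i on B i ∩ B (i-1)) (f|_{B i ∩ B (i-1)})`.) -/
noncomputable def seqDensity (ℓ : ℕ) (B : Fin ℓ → Finset V)
    (μ : ∀ i, (↥(B i) → Bool) → ℝ) :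
    (↥(Finset.univ.biUnion B) → Bool) → ℝ := fun f =>
  ∏ i : Fin ℓ,
    if (i : ℕ) = 0 then
      μ i (res (Finset.subset_biUnion_of_mem B (Finset.mem_univ i)) f)
    else
      μ i (res (Finset.subset_biUnion_of_mem B (Finset.mem_univ i)) f) /
        marg
          (show B i ∩ B ⟨(i : ℕ) - 1, lt_of_le_of_lt (Nat.sub_le _ _) i.isLt⟩ ⊆ B i from
            Finset.inter_subset_left)
          (μ i)
          (res
            (Finset.Subset.trans Finset.inter_subset_left
              (Finset.subset_biUnion_of_mem B (Finset.mem_univ i))) f)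

theorem glue_sum {S T C W : Finset V} (hT : T ⊆ W) (hC : C ⊆ W) (hW : W ⊆ T ∪ C)
    (hST : S ⊆ T) (hSC : S ⊆ C) (hS : T ∩ C ⊆ S)
    (φ : (↥T → Bool) → ℝ) (ψ : (↥C → Bool) → ℝ) :
    ∑ f : ↥W → Bool, φ (res hT f) * ψ (res hC f) =
      ∑ t : ↥T → Bool, ∑ c : ↥C → Bool,
        if res hSC c = res hST t then φ t * ψ c else 0 := by
  rw [← Fintype.sum_prod_type', ← Finset.sum_filter]
  refine Finset.sum_bij' (fun f _ => (res hT f, res hC f))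
    (fun p _ => fun x => if h : x.1 ∈ T then p.1 ⟨x.1, h⟩ else
      if h' : x.1 ∈ C then p.2 ⟨x.1, h'⟩ else false) ?_ ?_ ?_ ?_ ?_
  · intro f _
    simp only [Finset.mem_filter, Finset.mem_univ, true_and]
    rfl
  · intro p _
    exact Finset.mem_univ _
  · intro f _
    funext x
    by_cases h : x.1 ∈ T
    · simp [h, res]
    · have h' : x.1 ∈ C := by
        have := hW x.2
        simp only [Finset.mem_union] at this
        tauto
      simp [h, h', res]
  · rintro ⟨t, c⟩ hp
    simp only [Finset.mem_filter, Finset.mem_univ, true_and] at hp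
    refine Prod.ext ?_ ?_
    · funext x
      simp [res]
    · funext x
      by_cases h : x.1 ∈ T
      · have := congrFun hp ⟨x.1, hS (Finset.mem_inter.2 ⟨h, x.2⟩)⟩
        simp only [res] at this
        simp [res, h, this]
      · simp [res, h]
  · intro f _
    rfl

theorem marg_marg {S T W : Finset V} (hST : S ⊆ T) (hT : T ⊆ W) (D : (↥W → Bool) → ℝ) :
    marg hST (marg hT D) = marg (hST.trans hT) D := by
  funext g
  unfold marg
  simp only [← Finset.sum_filter]
  rw [Finset.sum_filter]
  simp only [Finset.sum_filter]
  have : ∀ t : ↥T → Bool, (if res hST t = g then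
      ∑ f : ↥W → Bool, (if res hT f = t then D f else 0) else 0) =
      ∑ f : ↥W → Bool, if res hT f = t then (if res hST t = g then D f else 0) else 0 := by
    intro t
    split_ifs with h
    · rfl
    · simp
  simp only [this]
  rw [Finset.sum_comm]
  refine Finset.sum_congr rfl fun f _ => ?_
  rw [Finset.sum_ite_eq]
  simp only [Finset.mem_univ, if_true]
  rfl

theorem marg_pos {S T : Finset V} (h : S ⊆ T) (μ : (↥T → Bool) → ℝ) (hpos : ∀ g, 0 < μ g)
    (t : ↥T → Bool) : 0 < marg h μ (res h t) := by
  unfold marg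
  refine Finset.sum_pos' (fun f _ => ?_) ⟨t, Finset.mem_univ _, by simpa using hpos t⟩
  split_ifs
  · exact (hpos f).le
  · exact le_rfl

theorem marg_pos' {S T : Finset V} (h : S ⊆ T) (μ : (↥T → Bool) → ℝ) (hpos : ∀ g, 0 < μ g)
    (s : ↥S → Bool) : 0 < marg h μ s := by
  have : s = res h (fun x => if hx : x.1 ∈ S then s ⟨x.1, hx⟩ else false) := by
    funext x
    simp [res]
  rw [this]
  exact marg_pos h μ hpos _

/-- marginal on the old part is preserved -/
theorem step_old {S T C W : Finset V} (hT : T ⊆ W) (hC : C ⊆ W) (hW : W ⊆ T ∪ C)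
    (hST : S ⊆ T) (hSC : S ⊆ C) (hS : T ∩ C ⊆ S)
    (D : (↥T → Bool) → ℝ) (μ : (↥C → Bool) → ℝ) (hpos : ∀ g, 0 < μ g) :
    marg hT (fun f => D (res hT f) * (μ (res hC f) / marg hSC μ (res (hSC.trans hC) f))) = D := by
  funext g
  have key := glue_sum hT hC hW hST hSC hS (fun t => if t = g then D t else 0)
    (fun c => μ c / marg hSC μ (res hSC c))
  have h1 : marg hT (fun f => D (res hT f) *
      (μ (res hC f) / marg hSC μ (res (hSC.trans hC) f))) g =
      ∑ f : ↥W → Bool, (if res hT f = g then D (res hT f) else 0) *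
        (μ (res hC f) / marg hSC μ (res hSC (res hC f))) := by
    unfold marg
    refine Finset.sum_congr rfl fun f _ => ?_
    split_ifs
    · rfl
    · simp
  rw [h1, key, Finset.sum_eq_single g]
  · simp only [if_true]
    have h2 : ∀ c : ↥C → Bool, (if res hSC c = res hST g then
        D g * (μ c / marg hSC μ (res hSC c)) else 0) =
        (if res hSC c = res hST g then μ c else 0) * (D g / marg hSC μ (res hST g)) := by
      intro c
      split_ifs with h
      · rw [h]; ring
      · simp
    simp only [h2]
    rw [← Finset.sum_mul]
    change marg hSC μ (res hST g) * _ = _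
    have := marg_pos' hSC μ hpos (res hST g)
    field_simp
  · intro t _ ht
    simp [ht]
  · simp

/-- marginal on the new bag -/
theorem step_new {S T C W : Finset V} (hT : T ⊆ W) (hC : C ⊆ W) (hW : W ⊆ T ∪ C)
    (hST : S ⊆ T) (hSC : S ⊆ C) (hS : T ∩ C ⊆ S)
    (D : (↥T → Bool) → ℝ) (μ : (↥C → Bool) → ℝ) (hpos : ∀ g, 0 < μ g)
    (hD : marg hST D = marg hSC μ) :
    marg hC (fun f => D (res hT f) * (μ (res hC f) / marg hSC μ (res (hSC.trans hC) f))) = μ := by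
  funext g
  have key := glue_sum hT hC hW hST hSC hS D
    (fun c => if c = g then μ c / marg hSC μ (res hSC c) else 0)
  have h1 : marg hC (fun f => D (res hT f) *
      (μ (res hC f) / marg hSC μ (res (hSC.trans hC) f))) g =
      ∑ f : ↥W → Bool, D (res hT f) * (if res hC f = g then
        (μ (res hC f) / marg hSC μ (res hSC (res hC f))) else 0) := by
    unfold marg
    refine Finset.sum_congr rfl fun f _ => ?_
    split_ifs
    · rfl
    · simp
  rw [h1, key, Finset.sum_comm, Finset.sum_eq_single g]
  · simp only [if_true]
    have h2 : ∀ t : ↥T → Bool, (if res hSC g = res hST t then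
        D t * (μ g / marg hSC μ (res hSC g)) else 0) =
        (if res hST t = res hSC g then D t else 0) * (μ g / marg hSC μ (res hSC g)) := by
      intro c
      simp only [eq_comm (a := res hSC g)]
      split_ifs with h
      · rfl
      · simp
    simp only [h2]
    rw [← Finset.sum_mul]
    change marg hST D (res hSC g) * _ = _
    rw [hD]
    have := marg_pos' hSC μ hpos (res hSC g)
    field_simp
  · intro t _ ht
    simp [ht]
  · simp

theorem stmt7 (ℓ : ℕ) (hℓ : 1 ≤ ℓ) (B : Fin ℓ → Finset V)
    -- the bags are nonempty
    (hne : ∀ i, (B i).Nonempty)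
    -- the interval property
    (hint : ∀ i k j : Fin ℓ, i ≤ k → k ≤ j → B i ∩ B j ⊆ B k)
    (μ : ∀ i, (↥(B i) → Bool) → ℝ)
    -- each μ i is a probability distribution assigning positive probability
    -- to every assignment
    (hpos : ∀ i g, 0 < μ i g)
    (hprob : ∀ i, ∑ g : ↥(B i) → Bool, μ i g = 1)
    -- consistency: the marginals of μ i and μ j on B i ∩ B j coincide
    (hcons : ∀ i j : Fin ℓ,
      marg (Finset.inter_subset_left : B i ∩ B j ⊆ B i) (μ i) =
      marg (Finset.inter_subset_right : B i ∩ B j ⊆ B j) (μ j)) :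
    ∀ (i : Fin ℓ) (g : ↥(B i) → Bool),
      marg (Finset.subset_biUnion_of_mem B (Finset.mem_univ i)) (seqDensity ℓ B μ) g
        = μ i g := by
  clear hℓ
  induction ℓ with
  | zero => exact fun i => i.elim0
  | succ n ih =>
    cases n with
    | zero =>
      intro i g
      obtain rfl : i = 0 := Fin.ext (by simp)
      have hC : B 0 ⊆ Finset.univ.biUnion B :=
        Finset.subset_biUnion_of_mem B (Finset.mem_univ 0)
      have hW : Finset.univ.biUnion B ⊆ B 0 ∪ B 0 := by
        intro x hx
        simpa using hx
      have key := glue_sum (S := B 0) hC hC hW (Finset.Subset.refl _) (Finset.Subset.refl _)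
        Finset.inter_subset_left (fun t => if t = g then 1 else 0) (μ 0)
      have e : ∀ f : ↥(B 0) → Bool, res (Finset.Subset.refl (B 0)) f = f := fun f => rfl
      simp only [e, Finset.sum_ite_eq, Finset.sum_ite_eq', Finset.mem_univ, if_true, ite_mul,
        one_mul, zero_mul] at key
      rw [← key]
      unfold marg seqDensity
      simp
    | succ m =>
      have ih' := ih (fun i => B i.castSucc) (fun i => hne _)
        (fun i k j hik hkj => hint _ _ _ (by simpa using hik) (by simpa using hkj))
        (fun i => μ i.castSucc) (fun i => hpos _) (fun i => hprob _) (fun i j => hcons _ _)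
      have hT : Finset.univ.biUnion (fun i : Fin (m+1) => B i.castSucc) ⊆
          Finset.univ.biUnion B := by
        intro x hx
        simp only [Finset.mem_biUnion, Finset.mem_univ, true_and] at hx ⊢
        obtain ⟨j, hj⟩ := hx
        exact ⟨_, hj⟩
      have hC : B (Fin.last (m+1)) ⊆ Finset.univ.biUnion B :=
        Finset.subset_biUnion_of_mem B (Finset.mem_univ _)
      have hW : Finset.univ.biUnion B ⊆
          Finset.univ.biUnion (fun i : Fin (m+1) => B i.castSucc) ∪ B (Fin.last (m+1)) := by
        intro x hx
        simp only [Finset.mem_union, Finset.mem_biUnion, Finset.mem_univ, true_and] at hx ⊢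
        obtain ⟨j, hj⟩ := hx
        induction j using Fin.lastCases with
        | last => exact Or.inr hj
        | cast j => exact Or.inl ⟨j, hj⟩
      have hPT : B (Fin.last m).castSucc ⊆
          Finset.univ.biUnion (fun i : Fin (m+1) => B i.castSucc) :=
        Finset.subset_biUnion_of_mem (fun i : Fin (m+1) => B i.castSucc)
          (Finset.mem_univ (Fin.last m))
      have hST : B (Fin.last (m+1)) ∩ B (Fin.last m).castSucc ⊆
          Finset.univ.biUnion (fun i : Fin (m+1) => B i.castSucc) :=
        Finset.inter_subset_right.trans hPT
      have hSC : B (Fin.last (m+1)) ∩ B (Fin.last m).castSucc ⊆ B (Fin.last (m+1)) :=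
        Finset.inter_subset_left
      have hS : Finset.univ.biUnion (fun i : Fin (m+1) => B i.castSucc) ∩ B (Fin.last (m+1)) ⊆
          B (Fin.last (m+1)) ∩ B (Fin.last m).castSucc := by
        intro x hx
        simp only [Finset.mem_inter, Finset.mem_biUnion, Finset.mem_univ, true_and] at hx ⊢
        obtain ⟨⟨j, hj⟩, hx⟩ := hx
        exact ⟨hx, hint j.castSucc _ (Fin.last (m+1))
          (Fin.castSucc_le_castSucc_iff.2 (Fin.le_last j)) (Fin.le_last _)
          (Finset.mem_inter.2 ⟨hj, hx⟩)⟩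
      have hD : seqDensity (m+1+1) B μ = fun f =>
          seqDensity (m+1) (fun i => B i.castSucc) (fun i => μ i.castSucc) (res hT f) *
          (μ (Fin.last (m+1)) (res hC f) /
            marg hSC (μ (Fin.last (m+1))) (res (hSC.trans hC) f)) := by
        funext f
        unfold seqDensity
        rw [Fin.prod_univ_castSucc]
        congr 1
      intro i
      refine congrFun ?_
      rw [hD]
      induction i using Fin.lastCases with
      | last =>
        refine step_new hT hC hW hST hSC hS _ _ (hpos _) ?_
        rw [hcons, ← marg_marg Finset.inter_subset_right hPT]
        congr 1
        funext g
        exact ih' (Fin.last m) g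
      | cast i =>
        have hi : B i.castSucc ⊆ Finset.univ.biUnion (fun i : Fin (m+1) => B i.castSucc) :=
          Finset.subset_biUnion_of_mem (fun i : Fin (m+1) => B i.castSucc) (Finset.mem_univ i)
        rw [← marg_marg hi hT, step_old hT hC hW hST hSC hS _ _ (hpos _)]
        funext g
        exact ih' i g
end

section
/- Let ℓ ≥ 3 and let 2 ≤ j ≤ ℓ−1 be an index with B_j ∩ B_{j+1} ⊆ B_{j−1}. Let A be the sequential-sampling distribution for B_1, …, B_ℓ with distributions μ_1, …, μ_ℓ, and let A' be the sequential-sampling distribution for the shortened sequence B_1, …, B_{j−1}, B_{j+1}, …, B_ℓ with the distributions μ_i for i ≠ j (this shortened sequence again satisfies the interval property and consistency). Then A' equals the marginal of A on U' = ⋃_{i ≠ j} B_i: for every assignment g : U' → {0,1}, Pr_{f ∼ A'}[ f = g ] = Pr_{f ∼ A}[ f|_{U'} = g ]. -/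
/-!
STATEMENT 8: Let ℓ ≥ 3 and let 2 ≤ j ≤ ℓ−1 be an index with B_j ∩ B_{j+1} ⊆ B_{j−1}.
Let A be the sequential-sampling distribution for B_1, …, B_ℓ and A' the one for the
shortened sequence B_1, …, B_{j−1}, B_{j+1}, …, B_ℓ.  Then A' equals the marginal of A
on U' = ⋃_{i ≠ j} B_i.  (Below the bags are indexed by `Fin ℓ`, so that the bag
`B_i` of the statement is `B ⟨i-1⟩`.)
-/

variable {V : Type*} [Fintype V] [DecidableEq V]

/-- The embedding of the indices of the shortened sequence (which skips the index
`j` of `Fin ℓ`) into the indices of the original sequence. -/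
def skipIdx (ℓ j : ℕ) (i : Fin (ℓ - 1)) : Fin ℓ :=
  if (i : ℕ) < j then ⟨i, lt_of_lt_of_le i.isLt (Nat.sub_le ℓ 1)⟩
  else ⟨(i : ℕ) + 1, by have := i.isLt; omega⟩

theorem marg_pos_aux {S S' : Finset V} (h : S ⊆ S') (φ : (↥S' → Bool) → ℝ)
    (hφ : ∀ f, 0 < φ f) (g : ↥S → Bool) : 0 < marg h φ g := by
  unfold marg
  refine Finset.sum_pos' (fun f _ => ?_) ?_
  · split_ifs
    · exact (hφ f).le
    · exact le_rfl
  · refine ⟨fun x => if hx : x.1 ∈ S then g ⟨x.1, hx⟩ else false, Finset.mem_univ _, ?_⟩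
    rw [if_pos]
    · exact hφ _
    · funext x
      simp [res]

theorem sum_ext_aux {U' U S I : Finset V} (hU : U' ⊆ U) (hS : S ⊆ U) (hIS : I ⊆ S)
    (hIU : I ⊆ U') (hcov : ∀ x ∈ U, x ∈ U' ∨ x ∈ S) (hI : ∀ x ∈ U', x ∈ S → x ∈ I)
    (φ : (↥S → Bool) → ℝ) (g : ↥U' → Bool) :
    (∑ f : ↥U → Bool, if res hU f = g then φ (res hS f) else 0) = marg hIS φ (res hIU g) := by
  unfold marg
  rw [← Finset.sum_filter, ← Finset.sum_filter]
  refine Finset.sum_bij' (fun f _ => res hS f)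
    (fun h _ => fun x => if hx : x.1 ∈ U' then g ⟨x.1, hx⟩ else
      if hx : x.1 ∈ S then h ⟨x.1, hx⟩ else false) ?_ ?_ ?_ ?_ ?_
  · intro f hf
    simp only [Finset.mem_filter, Finset.mem_univ, true_and] at hf ⊢
    subst hf
    rfl
  · intro h hh
    simp only [Finset.mem_filter, Finset.mem_univ, true_and] at hh ⊢
    funext x
    simp [res]
  · intro f hf
    simp only [Finset.mem_filter, Finset.mem_univ, true_and] at hf
    subst hf
    funext x
    rcases hcov x.1 x.2 with hx | hx
    · simp [res, hx]
    · simp [res, hx]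
  · intro h hh
    simp only [Finset.mem_filter, Finset.mem_univ, true_and] at hh
    funext x
    by_cases hx : x.1 ∈ U'
    · have := congrFun hh ⟨x.1, hI _ hx x.2⟩
      simp only [res] at this
      simp [res, hx, this]
    · simp [res, hx]
  · intro f hf
    rfl

/-- one factor of the density -/
noncomputable def condD {ι : Type} (B : ι → Finset V) (μ : ∀ i, (↥(B i) → Bool) → ℝ)
    {U : Finset V} (k m : ι) (hk : B k ⊆ U) (f : ↥U → Bool) : ℝ :=
  μ k (res hk f) / marg (Finset.inter_subset_left : B k ∩ B m ⊆ B k) (μ k)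
    (res (Finset.Subset.trans Finset.inter_subset_left hk) f)

theorem marg_congr_aux {S S₂ T U : Finset V} (h : S = S₂) (hS : S ⊆ T) (hS₂ : S₂ ⊆ T)
    (hU : S ⊆ U) (hU₂ : S₂ ⊆ U) (φ : (↥T → Bool) → ℝ) (f : ↥U → Bool) :
    marg hS φ (res hU f) = marg hS₂ φ (res hU₂ f) := by
  subst h; rfl

theorem condD_congr {ι : Type} (B : ι → Finset V) (μ : ∀ i, (↥(B i) → Bool) → ℝ)
    {U' U : Finset V} (hU : U' ⊆ U) (k k' m m' : ι) (hkk : k = k') (hk : B k ⊆ U')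
    (hk' : B k' ⊆ U) (h : B k ∩ B m = B k' ∩ B m') (f : ↥U → Bool) :
    condD B μ k m hk (res hU f) = condD B μ k' m' hk' f := by
  subst hkk
  unfold condD
  congr 1
  exact marg_congr_aux h _ _ (Finset.Subset.trans Finset.inter_subset_left hk')
    (Finset.Subset.trans Finset.inter_subset_left hk') (μ k) f

theorem mu_congr {ι : Type} (B : ι → Finset V) (μ : ∀ i, (↥(B i) → Bool) → ℝ)
    {U' U : Finset V} (hU : U' ⊆ U) (k k' : ι) (hkk : k = k') (hk : B k ⊆ U')
    (hk' : B k' ⊆ U) (f : ↥U → Bool) :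
    μ k (res hk (res hU f)) = μ k' (res hk' f) := by
  subst hkk; rfl

theorem stmt8 (ℓ : ℕ) (hℓ : 3 ≤ ℓ)
    (j : ℕ) (hj2 : 2 ≤ j) (hjl : j ≤ ℓ - 1)
    (B : Fin ℓ → Finset V)
    -- the bags are nonempty
    (hne : ∀ i, (B i).Nonempty)
    -- the interval property
    (hint : ∀ i k j' : Fin ℓ, i ≤ k → k ≤ j' → B i ∩ B j' ⊆ B k)
    (μ : ∀ i, (↥(B i) → Bool) → ℝ)
    -- each μ i is a probability distribution assigning positive probability
    -- to every assignment
    (hpos : ∀ i g, 0 < μ i g)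
    (hprob : ∀ i, ∑ g : ↥(B i) → Bool, μ i g = 1)
    -- consistency: the marginals of μ i and μ j' on B i ∩ B j' coincide
    (hcons : ∀ i j' : Fin ℓ,
      marg (Finset.inter_subset_left : B i ∩ B j' ⊆ B i) (μ i) =
      marg (Finset.inter_subset_right : B i ∩ B j' ⊆ B j') (μ j'))
    -- B_j ∩ B_{j+1} ⊆ B_{j-1}  (in `Fin ℓ` indexing: B ⟨j-1⟩ ∩ B ⟨j⟩ ⊆ B ⟨j-2⟩)
    (hred : B ⟨j - 1, by omega⟩ ∩ B ⟨j, by omega⟩ ⊆ B ⟨j - 2, by omega⟩)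
    -- U' ⊆ U
    (hsub : Finset.univ.biUnion (fun i => B (skipIdx ℓ (j - 1) i)) ⊆ Finset.univ.biUnion B) :
    ∀ g : ↥(Finset.univ.biUnion (fun i => B (skipIdx ℓ (j - 1) i))) → Bool,
      seqDensity (ℓ - 1) (fun i => B (skipIdx ℓ (j - 1) i))
          (fun i => μ (skipIdx ℓ (j - 1) i)) g
        = marg hsub (seqDensity ℓ B μ) g := by
  intro g
  obtain ⟨n, rfl⟩ : ∃ n, ℓ = n + 1 := ⟨ℓ - 1, by omega⟩
  obtain ⟨p, rfl⟩ : ∃ p, j = p + 1 := ⟨j - 1, by omega⟩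
  have hp1 : 1 ≤ p := by omega
  have hpn : p < n := by omega
  set P : Fin (n + 1) := ⟨p, by omega⟩ with hP
  set Q : Fin (n + 1) := ⟨p - 1, by omega⟩ with hQ
  set R : Fin (n + 1) := ⟨p + 1, by omega⟩ with hR
  have hred' : B P ∩ B R ⊆ B Q := hred
  have hskip : ∀ i : Fin n, skipIdx (n + 1) (p + 1 - 1) i = P.succAbove i := by
    intro i
    unfold skipIdx
    ext
    simp only [Fin.succAbove, hP, Fin.lt_def]
    by_cases h : (i : ℕ) < p <;> simp [h]
  have hmem' : ∀ i : Fin n, B (skipIdx (n + 1) (p + 1 - 1) i) ⊆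
      Finset.univ.biUnion (fun i => B (skipIdx (n + 1) (p + 1 - 1) i)) := fun i =>
    Finset.subset_biUnion_of_mem (fun i => B (skipIdx (n + 1) (p + 1 - 1) i)) (Finset.mem_univ i)
  have hmem : ∀ i : Fin (n + 1), B i ⊆ Finset.univ.biUnion B := fun i =>
    Finset.subset_biUnion_of_mem B (Finset.mem_univ i)
  have hin : ∀ k : Fin (n + 1), k ≠ P →
      B k ⊆ Finset.univ.biUnion (fun i => B (skipIdx (n + 1) (p + 1 - 1) i)) := by
    intro k hk
    obtain ⟨i, hi⟩ := Fin.exists_succAbove_eq hk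
    have := hmem' i
    rwa [hskip i, hi] at this
  have hQP : Q ≠ P := by
    simp only [hP, hQ, ne_eq, Fin.mk.injEq]; omega
  -- intersections
  have hRQ : B R ∩ B Q = B R ∩ B P := by
    ext x
    simp only [Finset.mem_inter]
    constructor
    · rintro ⟨h1, h2⟩
      refine ⟨h1, hint Q P R ?_ ?_ (Finset.mem_inter.2 ⟨h2, h1⟩)⟩ <;>
        simp only [hP, hQ, hR, Fin.mk_le_mk] <;> omega
    · rintro ⟨h1, h2⟩
      exact ⟨h1, hred' (Finset.mem_inter.2 ⟨h2, h1⟩)⟩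
  have hPI : ∀ x ∈ Finset.univ.biUnion (fun i => B (skipIdx (n + 1) (p + 1 - 1) i)),
      x ∈ B P → x ∈ B P ∩ B Q := by
    intro x hx hxP
    rw [Finset.mem_inter]
    refine ⟨hxP, ?_⟩
    simp only [Finset.mem_biUnion, Finset.mem_univ, true_and] at hx
    obtain ⟨i, hi⟩ := hx
    rw [hskip i] at hi
    have hne' := Fin.succAbove_ne P i
    generalize P.succAbove i = k at hi hne'
    rcases lt_or_gt_of_ne hne' with hlt | hgt
    · refine hint k Q P ?_ ?_ (Finset.mem_inter.2 ⟨hi, hxP⟩) <;>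
        simp only [hP, hQ, Fin.le_def, Fin.lt_def] at * <;> omega
    · refine hred' (Finset.mem_inter.2 ⟨hxP, hint P R k ?_ ?_ (Finset.mem_inter.2 ⟨hxP, hi⟩)⟩) <;>
        simp only [hP, hR, Fin.le_def, Fin.lt_def] at * <;> omega
  have hcov : ∀ x ∈ Finset.univ.biUnion B,
      x ∈ Finset.univ.biUnion (fun i => B (skipIdx (n + 1) (p + 1 - 1) i)) ∨ x ∈ B P := by
    intro x hx
    simp only [Finset.mem_biUnion, Finset.mem_univ, true_and] at hx
    obtain ⟨k, hk⟩ := hx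
    by_cases h : k = P
    · right; rwa [h] at hk
    · left; exact hin k h hk
  -- factorization
  have hfac : ∀ f, seqDensity (n + 1) B μ f = condD B μ P Q (hmem P) f *
      seqDensity n (fun i => B (skipIdx (n + 1) (p + 1 - 1) i))
          (fun i => μ (skipIdx (n + 1) (p + 1 - 1) i)) (res hsub f) := by
    intro f
    unfold seqDensity
    rw [Fin.prod_univ_succAbove _ P]
    congr 1
    · rw [if_neg (by simp only [hP]; omega)]
      rfl
    · refine Finset.prod_congr rfl (fun i _ => ?_)
      symm
      by_cases hi : (i : ℕ) = 0
      · have h0 : ((P.succAbove i : Fin (n + 1)) : ℕ) = 0 := by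
          rw [← hskip i]; unfold skipIdx
          rw [if_pos (by omega)]; exact hi
        rw [if_pos hi, if_pos h0]
        exact mu_congr B μ hsub _ _ (hskip i) (hmem' i) (hmem _) f
      · have h0 : ((P.succAbove i : Fin (n + 1)) : ℕ) ≠ 0 := by
          rw [← hskip i]; unfold skipIdx
          split_ifs
          · exact hi
          · simp
        rw [if_neg hi, if_neg h0]
        refine condD_congr B μ hsub (skipIdx (n + 1) (p + 1 - 1) i) (P.succAbove i)
          (skipIdx (n + 1) (p + 1 - 1) ⟨(i : ℕ) - 1, lt_of_le_of_lt (Nat.sub_le _ _) i.isLt⟩)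
          ⟨((P.succAbove i : Fin (n + 1)) : ℕ) - 1, lt_of_le_of_lt (Nat.sub_le _ _)
            (P.succAbove i).isLt⟩ (hskip i) (hmem' i) (hmem _) ?_ f
        have hv : ∀ i : Fin n, ((skipIdx (n + 1) (p + 1 - 1) i : Fin (n + 1)) : ℕ) =
            if (i : ℕ) < p then (i : ℕ) else i + 1 := by
          intro i
          unfold skipIdx
          simp only [Nat.add_sub_cancel]
          split_ifs <;> rfl
        by_cases hip : (i : ℕ) = p
        · have e1 : skipIdx (n + 1) (p + 1 - 1) i = R := by
            ext; rw [hv]; simp [hip, hR]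
          have e2 : skipIdx (n + 1) (p + 1 - 1)
              ⟨(i : ℕ) - 1, lt_of_le_of_lt (Nat.sub_le _ _) i.isLt⟩ = Q := by
            ext; rw [hv]; simp only [hQ]; split_ifs <;> omega
          have e3 : P.succAbove i = R := by rw [← hskip i, e1]
          have e4 : (⟨((P.succAbove i : Fin (n + 1)) : ℕ) - 1, lt_of_le_of_lt (Nat.sub_le _ _)
            (P.succAbove i).isLt⟩ : Fin (n + 1)) = P := by
            have e5 : ((P.succAbove i : Fin (n + 1)) : ℕ) = p + 1 := by rw [e3]
            have e6 : (P : ℕ) = p := rfl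
            apply Fin.ext
            show ((P.succAbove i : Fin (n + 1)) : ℕ) - 1 = (P : ℕ)
            omega
          rw [e4, e3, e2, e1, hRQ]
        · have e4 : skipIdx (n + 1) (p + 1 - 1)
              ⟨(i : ℕ) - 1, lt_of_le_of_lt (Nat.sub_le _ _) i.isLt⟩ =
              (⟨((P.succAbove i : Fin (n + 1)) : ℕ) - 1, lt_of_le_of_lt (Nat.sub_le _ _)
            (P.succAbove i).isLt⟩ : Fin (n + 1)) := by
            ext; rw [hv]; simp only [← hskip i, hv]; split_ifs <;> omega
          rw [e4, hskip i]
  have hIU : B P ∩ B Q ⊆ Finset.univ.biUnion (fun i => B (skipIdx (n + 1) (p + 1 - 1) i)) :=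
    Finset.Subset.trans Finset.inter_subset_right (hin Q hQP)
  have hsum := sum_ext_aux hsub (hmem P) (Finset.inter_subset_left : B P ∩ B Q ⊆ B P)
    hIU hcov hPI (μ P) g
  have hd := marg_pos_aux (Finset.inter_subset_left : B P ∩ B Q ⊆ B P) (μ P) (hpos P)
    (res hIU g)
  have key : ∀ f, (if res hsub f = g then seqDensity (n + 1) B μ f else 0) =
      (if res hsub f = g then μ P (res (hmem P) f) else 0) *
      ((marg (Finset.inter_subset_left : B P ∩ B Q ⊆ B P) (μ P) (res hIU g))⁻¹ *
        seqDensity n (fun i => B (skipIdx (n + 1) (p + 1 - 1) i))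
          (fun i => μ (skipIdx (n + 1) (p + 1 - 1) i)) g) := by
    intro f
    by_cases h : res hsub f = g
    · rw [if_pos h, if_pos h, hfac f, h, ← mul_assoc]
      congr 1
      subst h
      rfl
    · rw [if_neg h, if_neg h, zero_mul]
  show _ = ∑ f, (if res hsub f = g then seqDensity (n + 1) B μ f else 0)
  rw [Finset.sum_congr rfl (fun f _ => key f), ← Finset.sum_mul, hsum, ← mul_assoc,
    mul_inv_cancel₀ hd.ne', one_mul]
  rfl
end

section
/- Under the layered chain setup, for every real ρ > 0, the total weight of all edges with A-gap at least ρ is bounded by the total potential drop: the sum of w(u, v) over all 0 ≤ i ≤ ℓ−1 and all pairs u ∈ S_i, v ∈ S_{i+1} with Pr[X_i = u] > 0, Pr[X_{i+1} = v] > 0, and |A(u) − A(v)| ≥ ρ, is at most (φ(0) − φ(ℓ)) / ρ². -/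
/-!
STATEMENT 11: Under the layered chain setup, for every real ρ > 0, the total weight of
all edges with A-gap at least ρ is bounded by the total potential drop:
Σ w(u,v) over all 0 ≤ i ≤ ℓ−1 and pairs u ∈ S_i, v ∈ S_{i+1} with Pr[X_i = u] > 0,
Pr[X_{i+1} = v] > 0, and |A(u) − A(v)| ≥ ρ, is at most (φ(0) − φ(ℓ)) / ρ².
-/

open Classical in
/-- Probability of the event `A` under the finitely-supported distribution `p`. -/
noncomputable def prE {Ω : Type*} [Fintype Ω] (p : Ω → ℝ) (A : Ω → Prop) : ℝ :=
  ∑ ω, if A ω then p ω else 0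

/-- Expectation of `f` under the finitely-supported distribution `p`. -/
noncomputable def expE {Ω : Type*} [Fintype Ω] (p : Ω → ℝ) (f : Ω → ℝ) : ℝ :=
  ∑ ω, p ω * f ω

/-- Variance of `f` under the finitely-supported distribution `p`. -/
noncomputable def varE {Ω : Type*} [Fintype Ω] (p : Ω → ℝ) (f : Ω → ℝ) : ℝ :=
  expE p fun ω => (f ω - expE p f) ^ 2

/-- Conditional probability `Pr[A | B]` under `p`. -/
noncomputable def cprE {Ω : Type*} [Fintype Ω] (p : Ω → ℝ) (A B : Ω → Prop) : ℝ :=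
  prE p (fun ω => A ω ∧ B ω) / prE p B

/-- `Aval p A0 Xi v = Pr[A0 | Xi = v] − 1/2`. -/
noncomputable def Aval {Ω σ : Type*} [Fintype Ω] (p : Ω → ℝ) (A0 : Ω → Prop)
    (Xi : Ω → σ) (v : σ) : ℝ :=
  cprE p A0 (fun ω => Xi ω = v) - 1 / 2

lemma prE_mono' {Ω : Type*} [Fintype Ω] (p : Ω → ℝ) (hp : ∀ ω, 0 ≤ p ω) (A B : Ω → Prop)
    (h : ∀ ω, A ω → B ω) : prE p A ≤ prE p B := by
  unfold prE
  apply Finset.sum_le_sum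
  intro ω _
  by_cases hA : A ω
  · simp [hA, h ω hA]
  · by_cases hB : B ω <;> simp [hA, hB, hp]

lemma prE_nonneg' {Ω : Type*} [Fintype Ω] (p : Ω → ℝ) (hp : ∀ ω, 0 ≤ p ω) (A : Ω → Prop) :
    0 ≤ prE p A := by
  unfold prE
  apply Finset.sum_nonneg
  intro ω _
  split_ifs
  · exact hp ω
  · exact le_rfl

open Classical in
lemma fiber_eq {Ω σ : Type*} [Fintype Ω] [Fintype σ] (Y : Ω → σ) (f k : Ω → ℝ)
    (hfk : ∀ y, (∑ ω, if Y ω = y then f ω else 0) = ∑ ω, if Y ω = y then k ω else 0)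
    (h : σ → ℝ) : ∑ ω, f ω * h (Y ω) = ∑ ω, k ω * h (Y ω) := by
  have key : ∀ f : Ω → ℝ, ∑ ω, f ω * h (Y ω) =
      ∑ y, (∑ ω, if Y ω = y then f ω else 0) * h y := by
    intro f
    simp_rw [Finset.sum_mul]
    rw [Finset.sum_comm]
    apply Finset.sum_congr rfl
    intro ω _
    simp [ite_mul]
  rw [key f, key k]
  simp_rw [hfk]

open Classical in
lemma fiber_prE {Ω σ τ : Type*} [Fintype Ω] (p : Ω → ℝ) (A0 : Ω → Prop)
    (X : Ω → σ) (Y : Ω → τ) (F : σ → ℝ) (c : σ) (b : τ)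
    (h : prE p (fun ω => A0 ω ∧ Y ω = b ∧ X ω = c) = F c * prE p (fun ω => Y ω = b ∧ X ω = c)) :
    (∑ ω, if (X ω, Y ω) = (c, b) then (if A0 ω then p ω else 0) else 0)
      = ∑ ω, if (X ω, Y ω) = (c, b) then p ω * F (X ω) else 0 := by
  unfold prE at h
  rw [Finset.mul_sum] at h
  convert h using 1
  · apply Finset.sum_congr rfl
    intro ω _
    by_cases h1 : A0 ω <;> by_cases h2 : X ω = c <;> by_cases h3 : Y ω = b <;> simp [h1, h2, h3]
  · apply Finset.sum_congr rfl
    intro ω _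
    by_cases h2 : X ω = c <;> by_cases h3 : Y ω = b <;> simp [h2, h3, mul_comm]

open Classical in
lemma L2 {Ω σ τ : Type*} [Fintype Ω] [Fintype σ] [Fintype τ] (p : Ω → ℝ) (hp : ∀ ω, 0 ≤ p ω)
    (A0 : Ω → Prop) (X : Ω → σ) (Y : Ω → τ)
    (hci : ∀ b c, prE p (fun ω => A0 ω ∧ Y ω = b ∧ X ω = c) * prE p (fun ω => X ω = c)
        = prE p (fun ω => A0 ω ∧ X ω = c) * prE p (fun ω => Y ω = b ∧ X ω = c))
    (h : σ × τ → ℝ) :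
    ∑ ω, (if A0 ω then p ω else 0) * h (X ω, Y ω)
      = ∑ ω, (p ω * (Aval p A0 X (X ω) + 1 / 2)) * h (X ω, Y ω) := by
  apply fiber_eq (fun ω => (X ω, Y ω))
  rintro ⟨c, b⟩
  suffices hh : _ by
    convert fiber_prE p A0 X Y (fun x => Aval p A0 X x + 1 / 2) c b hh
  simp only [Aval, cprE, sub_add_cancel]
  by_cases hc : prE p (fun ω => X ω = c) = 0
  · have e1 : prE p (fun ω => A0 ω ∧ Y ω = b ∧ X ω = c) = 0 :=
      le_antisymm (hc ▸ prE_mono' p hp _ _ (fun ω h => h.2.2)) (prE_nonneg' p hp _)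
    have e2 : prE p (fun ω => Y ω = b ∧ X ω = c) = 0 :=
      le_antisymm (hc ▸ prE_mono' p hp _ _ (fun ω h => h.2)) (prE_nonneg' p hp _)
    rw [e1, e2, mul_zero]
  · have := hci b c
    field_simp
    linarith

lemma L1 {Ω σ : Type*} [Fintype Ω] [Fintype σ] (p : Ω → ℝ) (hp : ∀ ω, 0 ≤ p ω)
    (A0 : Ω → Prop) [DecidablePred A0] (X : Ω → σ) (h : σ → ℝ) :
    ∑ ω, (if A0 ω then p ω else 0) * h (X ω)
      = ∑ ω, (p ω * (Aval p A0 X (X ω) + 1 / 2)) * h (X ω) := by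
  have := L2 p hp A0 X (fun _ => ()) (by intro b c; simp) (fun x => h x.1)
  convert this using 3
  congr!

lemma mean_zero {Ω σ : Type*} [Fintype Ω] [Fintype σ] (p : Ω → ℝ) (hp : ∀ ω, 0 ≤ p ω)
    (hsum : ∑ ω, p ω = 1)
    (A0 : Ω → Prop) (h0 : prE p A0 = 1 / 2) (X : Ω → σ) :
    ∑ ω, p ω * Aval p A0 X (X ω) = 0 := by
  classical
  have := L1 p hp A0 X (fun _ => 1)
  simp only [mul_one, mul_add, Finset.sum_add_distrib, ← Finset.sum_mul, hsum] at this
  have h2 : (∑ ω, if A0 ω then p ω else 0) = 1 / 2 := by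
    rw [← h0]; unfold prE; congr!
  linarith

lemma var_eq {Ω σ : Type*} [Fintype Ω] [Fintype σ] (p : Ω → ℝ) (hp : ∀ ω, 0 ≤ p ω)
    (hsum : ∑ ω, p ω = 1)
    (A0 : Ω → Prop) (h0 : prE p A0 = 1 / 2) (X : Ω → σ) :
    varE p (fun ω => Aval p A0 X (X ω)) = ∑ ω, p ω * (Aval p A0 X (X ω)) ^ 2 := by
  simp only [varE, expE, mean_zero p hp hsum A0 h0 X, sub_zero]

lemma step_eq {Ω σ τ : Type*} [Fintype Ω] [Fintype σ] [Fintype τ] (p : Ω → ℝ)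
    (hp : ∀ ω, 0 ≤ p ω) (hsum : ∑ ω, p ω = 1)
    (A0 : Ω → Prop) (h0 : prE p A0 = 1 / 2) (X : Ω → σ) (Y : Ω → τ)
    (hci : ∀ b c, prE p (fun ω => A0 ω ∧ Y ω = b ∧ X ω = c) * prE p (fun ω => X ω = c)
        = prE p (fun ω => A0 ω ∧ X ω = c) * prE p (fun ω => Y ω = b ∧ X ω = c)) :
    ∑ ω, p ω * (Aval p A0 X (X ω) - Aval p A0 Y (Y ω)) ^ 2
      = varE p (fun ω => Aval p A0 X (X ω)) - varE p (fun ω => Aval p A0 Y (Y ω)) := by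
  classical
  rw [var_eq p hp hsum A0 h0, var_eq p hp hsum A0 h0]
  have e1 := L1 p hp A0 Y (fun y => Aval p A0 Y y)
  have e2 := L2 p hp A0 X Y hci (fun z => Aval p A0 Y z.2)
  have e3 : ∑ ω, (p ω * (Aval p A0 Y (Y ω) + 1 / 2)) * Aval p A0 Y (Y ω)
      = ∑ ω, (p ω * (Aval p A0 X (X ω) + 1 / 2)) * Aval p A0 Y (Y ω) := by
    rw [← e1]
    convert e2 using 1
  rw [← sub_eq_zero, ← Finset.sum_sub_distrib] at e3
  rw [← sub_eq_zero, ← Finset.sum_sub_distrib, ← Finset.sum_sub_distrib]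
  have e4 : ∀ x : ℝ, x = 0 → 2 * x = 0 := by intro x hx; rw [hx, mul_zero]
  rw [← e4 _ e3, Finset.mul_sum]
  apply Finset.sum_congr rfl
  intro ω _
  ring

open Classical in
lemma edge_sum {Ω σ τ : Type*} [Fintype Ω] [Fintype σ] [Fintype τ] (p : Ω → ℝ)
    (X : Ω → σ) (Y : Ω → τ) (C : σ → τ → Prop)
    [∀ u v, Decidable (C u v)] :
    (∑ u, ∑ v, if C u v then prE p (fun ω => X ω = u ∧ Y ω = v) else 0)
      = ∑ ω, if C (X ω) (Y ω) then p ω else 0 := by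
  have : ∀ u v, (if C u v then prE p (fun ω => X ω = u ∧ Y ω = v) else 0)
      = ∑ ω, if X ω = u then (if Y ω = v then (if C u v then p ω else 0) else 0) else 0 := by
    intro u v
    unfold prE
    by_cases h : C u v
    · simp only [h, if_true]
      apply Finset.sum_congr rfl
      intro ω _
      by_cases h2 : X ω = u <;> by_cases h3 : Y ω = v <;> simp [h2, h3]
    · simp [h]
  simp_rw [this]
  have h2 : ∀ u, (∑ v, ∑ ω, if X ω = u then (if Y ω = v then (if C u v then p ω else 0) else 0)
      else 0) = ∑ ω, ∑ v, if X ω = u then (if Y ω = v then (if C u v then p ω else 0) else 0)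
      else 0 := fun u => Finset.sum_comm
  simp_rw [h2]
  rw [Finset.sum_comm]
  apply Finset.sum_congr rfl
  intro ω _
  rw [Finset.sum_eq_single (X ω), Finset.sum_eq_single (Y ω)]
  · simp
  · intro v _ hv; simp [hv.symm]
  · simp
  · intro u _ hu; simp [hu.symm]
  · simp

open Classical in
theorem stmt11 {Ω : Type*} [Fintype Ω] (ℓ : ℕ) (hℓ : 1 ≤ ℓ)
    (S : ℕ → Type*) [∀ i, Fintype (S i)]
    -- a finite probability space
    (p : Ω → ℝ) (hp : ∀ ω, 0 ≤ p ω) (hsum : ∑ ω, p ω = 1)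
    (X : ∀ i, Ω → S i)
    -- X_0 and X_{i+1} are conditionally independent given X_i
    (hci : ∀ i < ℓ, ∀ (a : S 0) (b : S (i + 1)) (c : S i),
      prE p (fun ω => X 0 ω = a ∧ X (i + 1) ω = b ∧ X i ω = c)
          * prE p (fun ω => X i ω = c)
        = prE p (fun ω => X 0 ω = a ∧ X i ω = c)
          * prE p (fun ω => X (i + 1) ω = b ∧ X i ω = c))
    (s0 s1 : S 0) (hs : s0 ≠ s1) (hX0 : ∀ ω, X 0 ω = s0 ∨ X 0 ω = s1)
    (h0 : prE p (fun ω => X 0 ω = s0) = 1 / 2)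
    (h1 : prE p (fun ω => X 0 ω = s1) = 1 / 2)
    (ρ : ℝ) (hρ : 0 < ρ) :
    ∑ i ∈ Finset.range ℓ, ∑ u : S i, ∑ v : S (i + 1),
        (if 0 < prE p (fun ω => X i ω = u) ∧ 0 < prE p (fun ω => X (i + 1) ω = v) ∧
            ρ ≤ |Aval p (fun ω' => X 0 ω' = s0) (X i) u
                  - Aval p (fun ω' => X 0 ω' = s0) (X (i + 1)) v| then
          prE p (fun ω => X i ω = u ∧ X (i + 1) ω = v)
        else 0)
      ≤ (varE p (fun ω => Aval p (fun ω' => X 0 ω' = s0) (X 0) (X 0 ω))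
          - varE p (fun ω => Aval p (fun ω' => X 0 ω' = s0) (X ℓ) (X ℓ ω))) / ρ ^ 2 := by
  have hstep : ∀ i ∈ Finset.range ℓ, (∑ u : S i, ∑ v : S (i + 1),
        (if 0 < prE p (fun ω => X i ω = u) ∧ 0 < prE p (fun ω => X (i + 1) ω = v) ∧
            ρ ≤ |Aval p (fun ω' => X 0 ω' = s0) (X i) u
                  - Aval p (fun ω' => X 0 ω' = s0) (X (i + 1)) v| then
          prE p (fun ω => X i ω = u ∧ X (i + 1) ω = v)
        else 0))
      ≤ (varE p (fun ω => Aval p (fun ω' => X 0 ω' = s0) (X i) (X i ω))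
          - varE p (fun ω => Aval p (fun ω' => X 0 ω' = s0) (X (i + 1)) (X (i + 1) ω)))
            / ρ ^ 2 := by
    intro i hi
    have hs := step_eq p hp hsum (fun ω' => X 0 ω' = s0) h0 (X i) (X (i + 1))
      (fun b c => hci i (Finset.mem_range.1 hi) s0 b c)
    have he := edge_sum p (X i) (X (i + 1)) (fun u v =>
      0 < prE p (fun ω => X i ω = u) ∧ 0 < prE p (fun ω => X (i + 1) ω = v) ∧
            ρ ≤ |Aval p (fun ω' => X 0 ω' = s0) (X i) u
                  - Aval p (fun ω' => X 0 ω' = s0) (X (i + 1)) v|)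
    rw [← hs, le_div_iff₀ (by positivity)]
    refine (congrArg (· * ρ ^ 2) he).le.trans ?_
    simp only [Finset.sum_mul]
    apply Finset.sum_le_sum
    intro ω _
    split_ifs with hC
    · apply mul_le_mul_of_nonneg_left _ (hp ω)
      rw [← sq_abs (_ - _)]
      exact pow_le_pow_left₀ hρ.le hC.2.2 2
    · rw [zero_mul]
      exact mul_nonneg (hp ω) (sq_nonneg _)
  refine (Finset.sum_le_sum hstep).trans ?_
  rw [← Finset.sum_div, Finset.sum_range_sub'
    (fun i => varE p (fun ω => Aval p (fun ω' => X 0 ω' = s0) (X i) (X i ω)))]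
end

section
/- Let V be a finite set, let s ≠ t be elements of V, let ℓ ≥ 1, and let I_0 = {s}, I_ℓ = {t}, and I_1, …, I_{ℓ−1} be subsets of V. Let μ be a probability distribution on assignments V → {0,1}. For 0 ≤ i ≤ ℓ−1 and assignments f_i : I_i → {0,1}, f_{i+1} : I_{i+1} → {0,1}, define the capacity w(f_i, f_{i+1}) = Pr_{f ∼ μ}[ f|_{I_i} = f_i ∧ f|_{I_{i+1}} = f_{i+1} ] and the flow g(f_i, f_{i+1}) = Pr_{f ∼ μ}[ f(s) = 0 ∧ f(t) = 1 ∧ f|_{I_i} = f_i ∧ f|_{I_{i+1}} = f_{i+1} ]. Then: (i) 0 ≤ g(f_i, f_{i+1}) ≤ w(f_i, f_{i+1}) for all edges; (ii) flow conservation holds: for every 1 ≤ i ≤ ℓ−1 and every f_i : I_i → {0,1}, Σ_{f_{i−1}} g(f_{i−1}, f_i) = Σ_{f_{i+1}} g(f_i, f_{i+1}); (iii) the flow value out of the source state (s ↦ 0) is Σ_{f_1} g(s↦0, f_1) = Pr_{f ∼ μ}[ f(s) = 0 ∧ f(t) = 1 ], no flow leaves the state (s ↦ 1), i.e. Σ_{f_1}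 g(s↦1, f_1) = 0, and no flow enters the state (t ↦ 0), i.e. Σ_{f_{ℓ−1}} g(f_{ℓ−1}, t↦0) = 0. -/
/-!
STATEMENT 13: The Markov flow graph carries a flow: the flow `g` is dominated by the
capacities `w`, satisfies flow conservation at the internal layers, has value
Pr[f(s)=0 ∧ f(t)=1] out of the source state (s ↦ 0), and no flow leaves (s ↦ 1) or
enters (t ↦ 0).
-/

variable {V : Type*} [Fintype V] [DecidableEq V]

/-- The capacity of the edge from the assignment `a` of `I i` to the assignment `b`
of `I (i+1)`: the probability under `μ` that `f|_{I i} = a` and `f|_{I (i+1)} = b`. -/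
noncomputable def capW (I : ℕ → Finset V) (μ : (V → Bool) → ℝ) (i : ℕ)
    (a : ↥(I i) → Bool) (b : ↥(I (i + 1)) → Bool) : ℝ :=
  ∑ f : V → Bool,
    if (fun x : ↥(I i) => f x.1) = a ∧ (fun x : ↥(I (i + 1)) => f x.1) = b then μ f
    else 0

/-- The flow on the edge from the assignment `a` of `I i` to the assignment `b` of
`I (i+1)`: the probability under `μ` that `f(s) = 0`, `f(t) = 1`, `f|_{I i} = a` and
`f|_{I (i+1)} = b`. -/
noncomputable def flowG (s t : V) (I : ℕ → Finset V) (μ : (V → Bool) → ℝ) (i : ℕ)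
    (a : ↥(I i) → Bool) (b : ↥(I (i + 1)) → Bool) : ℝ :=
  ∑ f : V → Bool,
    if f s = false ∧ f t = true ∧
        (fun x : ↥(I i) => f x.1) = a ∧ (fun x : ↥(I (i + 1)) => f x.1) = b then μ f
    else 0

theorem flowG_sum_left (s t : V) (I : ℕ → Finset V) (μ : (V → Bool) → ℝ) (i : ℕ)
    (b : ↥(I (i + 1)) → Bool) :
    ∑ a : ↥(I i) → Bool, flowG s t I μ i a b
      = ∑ f : V → Bool, if f s = false ∧ f t = true ∧
          (fun x : ↥(I (i + 1)) => f x.1) = b then μ f else 0 := by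
  unfold flowG
  rw [Finset.sum_comm]
  refine Finset.sum_congr rfl fun f _ => ?_
  rw [Finset.sum_eq_single (fun x : ↥(I i) => f x.1)]
  · simp
  · intro a _ ha
    rw [if_neg]
    exact fun h => ha h.2.2.1.symm
  · simp

theorem flowG_sum_right (s t : V) (I : ℕ → Finset V) (μ : (V → Bool) → ℝ) (i : ℕ)
    (a : ↥(I i) → Bool) :
    ∑ b : ↥(I (i + 1)) → Bool, flowG s t I μ i a b
      = ∑ f : V → Bool, if f s = false ∧ f t = true ∧
          (fun x : ↥(I i) => f x.1) = a then μ f else 0 := by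
  unfold flowG
  rw [Finset.sum_comm]
  refine Finset.sum_congr rfl fun f _ => ?_
  rw [Finset.sum_eq_single (fun x : ↥(I (i + 1)) => f x.1)]
  · simp
  · intro b _ hb
    rw [if_neg]
    exact fun h => hb h.2.2.2.symm
  · simp

theorem stmt13 (s t : V) (hst : s ≠ t) (ℓ : ℕ) (hℓ : 1 ≤ ℓ)
    (I : ℕ → Finset V) (hI0 : I 0 = {s}) (hIl : I ℓ = {t})
    (μ : (V → Bool) → ℝ) (hμ : ∀ f, 0 ≤ μ f) (hμ1 : ∑ f : V → Bool, μ f = 1) :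
    -- (i) 0 ≤ g ≤ w on all edges
    (∀ i < ℓ, ∀ (a : ↥(I i) → Bool) (b : ↥(I (i + 1)) → Bool),
      0 ≤ flowG s t I μ i a b ∧ flowG s t I μ i a b ≤ capW I μ i a b)
    -- (ii) flow conservation at the layers 1, …, ℓ−1
    ∧ (∀ j : ℕ, j + 2 ≤ ℓ → ∀ a : ↥(I (j + 1)) → Bool,
        ∑ h : ↥(I j) → Bool, flowG s t I μ j h a
          = ∑ h : ↥(I (j + 2)) → Bool, flowG s t I μ (j + 1) a h)
    -- (iii) the flow value out of the source state (s ↦ 0) is Pr[f(s)=0 ∧ f(t)=1],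
    ∧ (∑ b : ↥(I 1) → Bool, flowG s t I μ 0 (fun _ => false) b
        = ∑ f : V → Bool, if f s = false ∧ f t = true then μ f else 0)
    -- no flow leaves the state (s ↦ 1),
    ∧ (∑ b : ↥(I 1) → Bool, flowG s t I μ 0 (fun _ => true) b = 0)
    -- and no flow enters the state (t ↦ 0)
    ∧ (∀ j : ℕ, j + 1 = ℓ →
        ∑ a : ↥(I j) → Bool, flowG s t I μ j a (fun _ => false) = 0) := by
  have hs : s ∈ I 0 := by simp [hI0]
  refine ⟨?_, ?_, ?_, ?_, ?_⟩
  · intro i _ a b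
    constructor
    · refine Finset.sum_nonneg fun f _ => ?_
      split_ifs
      · exact hμ f
      · exact le_rfl
    · refine Finset.sum_le_sum fun f _ => ?_
      by_cases h : f s = false ∧ f t = true ∧
        (fun x : ↥(I i) => f x.1) = a ∧ (fun x : ↥(I (i + 1)) => f x.1) = b
      · rw [if_pos h, if_pos h.2.2]
      · rw [if_neg h]
        split_ifs
        · exact hμ f
        · exact le_rfl
  · intro j _ a
    rw [flowG_sum_left]
    exact (flowG_sum_right s t I μ (j + 1) a).symm
  · refine (flowG_sum_right s t I μ 0 _).trans ?_
    refine Finset.sum_congr rfl fun f _ => ?_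
    refine if_congr ⟨fun h => ⟨h.1, h.2.1⟩, fun h => ⟨h.1, h.2, ?_⟩⟩ rfl rfl
    funext x
    have hx : x.1 = s := by
      have key : ∀ y : V, y ∈ I 0 → y = s := by
        intro y hy
        rw [hI0] at hy
        exact Finset.mem_singleton.mp hy
      exact key x.1 x.2
    rw [hx, h.1]
  · refine (flowG_sum_right s t I μ 0 _).trans ?_
    refine Finset.sum_eq_zero fun f _ => if_neg ?_
    rintro ⟨h1, _, h3⟩
    have := congrFun h3 ⟨s, hs⟩
    simp [h1] at this
  · intro j hj
    have ht : t ∈ I (j + 1) := by simp [hj, hIl]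
    rw [flowG_sum_left]
    refine Finset.sum_eq_zero fun f _ => if_neg ?_
    rintro ⟨_, h1, h3⟩
    have := congrFun h3 ⟨t, ht⟩
    simp [h1] at this
end

section
/- Let B_1, …, B_ℓ, μ_1, …, μ_ℓ and the sequential-sampling distribution A be as in the setup, with U = B_1 ∪ … ∪ B_ℓ, and let e be an element not in U. For an assignment g of a set X, its mirror is the assignment obtained by exchanging the values 0 and 1 at every point. Define bags B'_i = B_i ∪ {e} and distributions μ'_i on assignments B'_i → {0,1} by μ'_i(g) = μ_i(g|_{B_i})/2 if g(e) = 0 and μ'_i(g) = μ_i(mirror of g|_{B_i})/2 if g(e) = 1. Then: (a) each μ'_i is mirror-symmetric, i.e. μ'_i(g) = μ'_i(mirror of g) for all g; (b) the sequence B'_1, …, B'_ℓ with the μ'_i again satisfies the interval property, positivity, and consistency; and (c) the sequential-sampling distribution A' for B'_1, …, B'_ℓ and μ'_1, …, μ'_ℓ satisfies, for every assignment g : U → {0,1}, Pr_{f ∼ A'}[ f|_U = g ] = (1/2) Pr_{f ∼ A}[ f = g ] + (1/2) Pr_{f ∼ A}[ f = mirror of g ]. -/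
/-!
STATEMENT 15: Mirror-symmetrization of the sequential-sampling distribution.
-/

variable {V : Type*} [Fintype V] [DecidableEq V]

/-- The mirror of an assignment: exchange the values `0` and `1` at every point. -/
def mir {S : Finset V} (g : ↥S → Bool) : ↥S → Bool := fun x => !(g x)

/-- The symmetrized distributions `μ'_i` on assignments of `B_i ∪ {e}`:
`μ'_i(g) = μ_i(g|_{B_i})/2` if `g(e) = 0`, and `μ'_i(g) = μ_i(mirror of g|_{B_i})/2`
if `g(e) = 1`. -/
noncomputable def mirSym (ℓ : ℕ) (e : V) (B : Fin ℓ → Finset V)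
    (μ : ∀ i, (↥(B i) → Bool) → ℝ) :
    ∀ i : Fin ℓ, (↥(B i ∪ {e}) → Bool) → ℝ := fun i g =>
  if g ⟨e, Finset.mem_union_right _ (Finset.mem_singleton_self e)⟩ = false then
    μ i (res Finset.subset_union_left g) / 2
  else
    μ i (mir (res Finset.subset_union_left g)) / 2

def tw {S : Finset V} (b : Bool) (g : ↥S → Bool) : ↥S → Bool := fun x => xor b (g x)

theorem tw_false {S : Finset V} (g : ↥S → Bool) : tw false g = g := by
  funext x; simp [tw]

theorem tw_true {S : Finset V} (g : ↥S → Bool) : tw true g = mir g := by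
  funext x; simp [tw, mir]

theorem mirSym_eq (ℓ : ℕ) (e : V) (B : Fin ℓ → Finset V)
    (μ : ∀ i, (↥(B i) → Bool) → ℝ) (i : Fin ℓ) (g : ↥(B i ∪ {e}) → Bool) :
    mirSym ℓ e B μ i g =
      μ i (tw (g ⟨e, Finset.mem_union_right _ (Finset.mem_singleton_self e)⟩)
        (res Finset.subset_union_left g)) / 2 := by
  unfold mirSym
  split_ifs with h
  · rw [h, tw_false]
  · rw [Bool.not_eq_false] at h
    rw [h, tw_true]

theorem marg_mirSym (ℓ : ℕ) (e : V) (B : Fin ℓ → Finset V)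
    (μ : ∀ i, (↥(B i) → Bool) → ℝ) (i : Fin ℓ) (hei : e ∉ B i)
    {S T : Finset V} (hS : S ⊆ B i) (hT : T ⊆ B i ∪ {e}) (heT : e ∈ T) (hST : S ⊆ T)
    (hTS : ∀ x ∈ T, x = e ∨ x ∈ S) (g : ↥T → Bool) :
    marg hT (mirSym ℓ e B μ i) g = marg hS (μ i) (tw (g ⟨e, heT⟩) (res hST g)) / 2 := by
  unfold marg
  rw [← Finset.sum_filter, ← Finset.sum_filter, Finset.sum_div]
  have hee : e ∈ B i ∪ {e} := Finset.mem_union_right _ (Finset.mem_singleton_self e)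
  refine Finset.sum_bij'
    (fun f _ => tw (f ⟨e, hee⟩) (res Finset.subset_union_left f))
    (fun f _ => fun x => if h : x.1 ∈ B i then xor (g ⟨e, heT⟩) (f ⟨x.1, h⟩) else g ⟨e, heT⟩)
    ?_ ?_ ?_ ?_ ?_
  · intro f hf
    simp only [Finset.mem_filter, Finset.mem_univ, true_and] at hf ⊢
    subst hf
    rfl
  · intro f hf
    simp only [Finset.mem_filter, Finset.mem_univ, true_and] at hf ⊢
    funext x
    rcases hTS x.1 x.2 with h | h
    · obtain ⟨x, hx⟩ := x
      simp only at h
      subst h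
      simp [res, hei]
    · have := congrFun hf ⟨x.1, h⟩
      simp only [res, tw] at this
      simp [res, hS h, this]
  · intro f hf
    simp only [Finset.mem_filter, Finset.mem_univ, true_and] at hf
    have h0 : g ⟨e, heT⟩ = f ⟨e, hee⟩ := by rw [← hf]; rfl
    funext x
    by_cases h : x.1 ∈ B i
    · simp [h, tw, res, h0]
    · have hx := x.2
      simp only [Finset.mem_union, h, Finset.mem_singleton, false_or] at hx
      obtain ⟨x, hx'⟩ := x
      simp only at hx
      subst hx
      simp [hei, h0]
  · intro f hf
    funext x
    simp [tw, res, hei]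
  · intro f hf
    exact mirSym_eq ℓ e B μ i f

theorem seq_mirSym (ℓ : ℕ) (hℓ : 1 ≤ ℓ) (B : Fin ℓ → Finset V)
    (μ : ∀ i, (↥(B i) → Bool) → ℝ)
    (e : V) (he : e ∉ Finset.univ.biUnion B)
    (hsub : Finset.univ.biUnion B ⊆ Finset.univ.biUnion (fun i => B i ∪ {e}))
    (hee : e ∈ Finset.univ.biUnion (fun i => B i ∪ {e}))
    (f : ↥(Finset.univ.biUnion (fun i => B i ∪ {e})) → Bool) :
    seqDensity ℓ (fun i => B i ∪ {e}) (mirSym ℓ e B μ) f =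
      seqDensity ℓ B μ (tw (f ⟨e, hee⟩) (res hsub f)) / 2 := by
  have hei : ∀ i, e ∉ B i := fun i h => he (Finset.mem_biUnion.2 ⟨i, Finset.mem_univ i, h⟩)
  obtain ⟨n, rfl⟩ : ∃ n, ℓ = n + 1 := ⟨ℓ - 1, by omega⟩
  unfold seqDensity
  rw [Fin.prod_univ_succ, Fin.prod_univ_succ, mul_div_right_comm]
  congr 1
  · simp only [Fin.val_zero, if_true]
    rw [mirSym_eq]
    rfl
  · refine Finset.prod_congr rfl fun i _ => ?_
    rw [if_neg (by simp), if_neg (by simp), mirSym_eq]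
    rw [marg_mirSym (n + 1) e B μ i.succ (hei _)
      (S := B i.succ ∩ B ⟨(i.succ : ℕ) - 1, lt_of_le_of_lt (Nat.sub_le _ _) i.succ.isLt⟩)
      Finset.inter_subset_left _ (by simp)
      (Finset.inter_subset_inter Finset.subset_union_left Finset.subset_union_left)
      (by
        intro x hx
        simp only [Finset.mem_inter, Finset.mem_union, Finset.mem_singleton] at hx ⊢
        tauto)]
    rw [div_div_div_cancel_right₀ two_ne_zero]
    rfl

theorem stmt15 (ℓ : ℕ) (hℓ : 1 ≤ ℓ) (B : Fin ℓ → Finset V)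
    -- the bags are nonempty
    (hne : ∀ i, (B i).Nonempty)
    -- the interval property
    (hint : ∀ i k j : Fin ℓ, i ≤ k → k ≤ j → B i ∩ B j ⊆ B k)
    (μ : ∀ i, (↥(B i) → Bool) → ℝ)
    -- each μ i is a probability distribution assigning positive probability
    -- to every assignment
    (hpos : ∀ i g, 0 < μ i g)
    (hprob : ∀ i, ∑ g : ↥(B i) → Bool, μ i g = 1)
    -- consistency: the marginals of μ i and μ j on B i ∩ B j coincide
    (hcons : ∀ i j : Fin ℓ,
      marg (Finset.inter_subset_left : B i ∩ B j ⊆ B i) (μ i) =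
      marg (Finset.inter_subset_right : B i ∩ B j ⊆ B j) (μ j))
    -- `e` is a new element, not in `U`
    (e : V) (he : e ∉ Finset.univ.biUnion B)
    -- U ⊆ U'
    (hsub : Finset.univ.biUnion B ⊆ Finset.univ.biUnion (fun i => B i ∪ {e})) :
    -- (a) each μ' i is mirror-symmetric
    (∀ (i : Fin ℓ) (g : ↥(B i ∪ {e}) → Bool), mirSym ℓ e B μ i g = mirSym ℓ e B μ i (mir g))
    -- (b) the shifted sequence again satisfies the interval property, positivity,
    -- and consistency
    ∧ (∀ i k j : Fin ℓ, i ≤ k → k ≤ j → (B i ∪ {e}) ∩ (B j ∪ {e}) ⊆ B k ∪ {e})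
    ∧ (∀ (i : Fin ℓ) (g : ↥(B i ∪ {e}) → Bool), 0 < mirSym ℓ e B μ i g)
    ∧ (∀ i j : Fin ℓ,
        marg (Finset.inter_subset_left : (B i ∪ {e}) ∩ (B j ∪ {e}) ⊆ B i ∪ {e})
          (mirSym ℓ e B μ i) =
        marg (Finset.inter_subset_right : (B i ∪ {e}) ∩ (B j ∪ {e}) ⊆ B j ∪ {e})
          (mirSym ℓ e B μ j))
    -- (c) the sequential-sampling distribution A' for the new sequence satisfies
    -- Pr_{f ∼ A'}[ f|_U = g ] = (1/2) Pr_{f ∼ A}[ f = g ] + (1/2) Pr_{f ∼ A}[ f = mirror g ]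
    ∧ (∀ g : ↥(Finset.univ.biUnion B) → Bool,
        marg hsub (seqDensity ℓ (fun i => B i ∪ {e}) (mirSym ℓ e B μ)) g
          = (1 / 2) * seqDensity ℓ B μ g + (1 / 2) * seqDensity ℓ B μ (mir g)) := by
  have hei : ∀ i, e ∉ B i := fun i h => he (Finset.mem_biUnion.2 ⟨i, Finset.mem_univ i, h⟩)
  refine ⟨?_, ?_, ?_, ?_, ?_⟩
  · intro i g
    rw [mirSym_eq, mirSym_eq]
    congr 2
    funext x
    simp [tw, mir, res]
  · intro i k j hik hkj x hx
    have := @hint i k j hik hkj x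
    simp only [Finset.mem_inter, Finset.mem_union, Finset.mem_singleton] at hx this ⊢
    tauto
  · intro i g
    rw [mirSym_eq]
    exact half_pos (hpos _ _)
  · intro i j
    funext g
    have heT : e ∈ (B i ∪ {e}) ∩ (B j ∪ {e}) := by simp
    have hST : B i ∩ B j ⊆ (B i ∪ {e}) ∩ (B j ∪ {e}) :=
      Finset.inter_subset_inter Finset.subset_union_left Finset.subset_union_left
    have hTS : ∀ x ∈ (B i ∪ {e}) ∩ (B j ∪ {e}), x = e ∨ x ∈ B i ∩ B j := by
      intro x hx
      simp only [Finset.mem_inter, Finset.mem_union, Finset.mem_singleton] at hx ⊢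
      tauto
    rw [marg_mirSym ℓ e B μ i (hei i) Finset.inter_subset_left _ heT hST hTS,
      marg_mirSym ℓ e B μ j (hei j) Finset.inter_subset_right _ heT hST hTS, hcons]
  · intro g
    have hee : e ∈ Finset.univ.biUnion (fun i => B i ∪ {e}) :=
      Finset.mem_biUnion.2 ⟨⟨0, hℓ⟩, Finset.mem_univ _, by simp⟩
    have key : marg hsub (seqDensity ℓ (fun i => B i ∪ {e}) (mirSym ℓ e B μ)) g =
        ∑ b : Bool, seqDensity ℓ B μ (tw b g) / 2 := by
      unfold marg
      rw [← Finset.sum_filter]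
      refine Finset.sum_bij' (fun f _ => f ⟨e, hee⟩)
        (fun b _ => fun x => if h : x.1 ∈ Finset.univ.biUnion B then g ⟨x.1, h⟩ else b)
        ?_ ?_ ?_ ?_ ?_
      · intro f hf
        exact Finset.mem_univ _
      · intro b hb
        rw [Finset.mem_filter]
        refine ⟨Finset.mem_univ _, ?_⟩
        funext x
        simp only [res]
        rw [dif_pos x.2]
      · intro f hf
        rw [Finset.mem_filter] at hf
        funext x
        by_cases h : x.1 ∈ Finset.univ.biUnion B
        · simp only [dif_pos h]
          rw [← hf.2]
          rfl
        · simp only [dif_neg h]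
          congr 1
          apply Subtype.ext
          obtain ⟨i, _, hi⟩ := Finset.mem_biUnion.1 x.2
          rcases Finset.mem_union.1 hi with h1 | h1
          · exact absurd (Finset.mem_biUnion.2 ⟨i, Finset.mem_univ i, h1⟩) h
          · exact (Finset.mem_singleton.1 h1).symm
      · intro b hb
        simp only [dif_neg he]
      · intro f hf
        rw [Finset.mem_filter] at hf
        rw [seq_mirSym ℓ hℓ B μ e he hsub hee f, hf.2]
    rw [key, Fintype.sum_bool, tw_true, tw_false]
    ring
end

section
/- Let T be the path on nodes 1, 2, …, 7 (in this order) with bags over the vertex set {a, b, c, d, e, f, g} given by B_1 = {a,b}, B_2 = {a,b,c}, B_3 = {a,c,d}, B_4 = {a,d,e}, B_5 = {a,e,f}, B_6 = {a,f,g}, B_7 = {a}. Then: (a) (T, B) is a tree decomposition of the graph on {a,…,g} whose edges are exactly the pairs of distinct vertices contained in a common bag; (b) the combinatorial length of T_{1↔7} is at most 1, and the combinatorial length of T_{7↔6} is at most 1; (c) the path T_{1↔6} contains no redundant internal node, so its only simplification is itself and its combinatorial length is exactly 5; consequently the combinatorial length of T_{1↔6} strictly exceeds the sum of the combinatorial lengths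 of T_{1↔7} and T_{7↔6}, i.e. combinatorial length does not satisfy the triangle inequality. -/
/-!
STATEMENT 16: The concrete example on the path with bags
B_1 = {a,b}, B_2 = {a,b,c}, B_3 = {a,c,d}, B_4 = {a,d,e}, B_5 = {a,e,f},
B_6 = {a,f,g}, B_7 = {a}, showing that combinatorial length does not satisfy the
triangle inequality.  Here nodes 1,…,7 are `0,…,6 : Fin 7` and vertices a,…,g are
`0,…,6 : Fin 7`.
-/

open SimpleGraph

/-- The bags of the example: `B_1 = {a,b}, B_2 = {a,b,c}, B_3 = {a,c,d},
B_4 = {a,d,e}, B_5 = {a,e,f}, B_6 = {a,f,g}, B_7 = {a}`. -/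
def B16 : Fin 7 → Set (Fin 7) :=
  ![{0, 1}, {0, 1, 2}, {0, 2, 3}, {0, 3, 4}, {0, 4, 5}, {0, 5, 6}, {0}]

/-- The graph on `{a,…,g}` whose edges are exactly the pairs of distinct vertices
contained in a common bag. -/
def G16 : SimpleGraph (Fin 7) :=
  SimpleGraph.fromRel (fun u v => ∃ i, u ∈ B16 i ∧ v ∈ B16 i)

/-- The path on the nodes `1, …, 7`. -/
def T16 : SimpleGraph (Fin 7) := SimpleGraph.pathGraph 7

instance decT16 : DecidableRel T16.Adj := fun u v =>
  decidable_of_iff (u.val + 1 = v.val ∨ v.val + 1 = u.val)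
    (by unfold T16; exact pathGraph_adj.symm)

def F16 : Fin 7 → Finset (Fin 7) :=
  ![{0, 1}, {0, 1, 2}, {0, 2, 3}, {0, 3, 4}, {0, 4, 5}, {0, 5, 6}, {0}]

theorem B16_eq (i : Fin 7) : B16 i = (F16 i : Set (Fin 7)) := by
  fin_cases i <;> simp [B16, F16]

theorem mem_B16 (i v : Fin 7) : v ∈ B16 i ↔ v ∈ F16 i := by
  rw [B16_eq]; simp

theorem sub_B16 (x w u : Fin 7) : B16 x ∩ B16 w ⊆ B16 u ↔ F16 x ∩ F16 w ⊆ F16 u := by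
  simp only [B16_eq]
  exact_mod_cast Iff.rfl

theorem T16_isTree : T16.IsTree := by
  rw [isTree_iff_connected_and_card]
  refine ⟨pathGraph_connected 6, ?_⟩
  rw [Nat.card_eq_fintype_card, Nat.card_eq_fintype_card, ← edgeFinset_card]
  decide

theorem T16_walk (n : ℕ) : ∀ i j : Fin 7, i.val + n = j.val →
    ∃ p : T16.Walk i j, ∀ k ∈ p.support, i ≤ k ∧ k ≤ j := by
  induction n with
  | zero =>
    intro i j h
    obtain rfl : i = j := Fin.ext (by simpa using h)
    exact ⟨Walk.nil, by simp⟩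
  | succ n ih =>
    intro i j h
    have hi : i.val + 1 < 7 := by omega
    obtain ⟨p, hp⟩ := ih ⟨i.val + 1, hi⟩ j (by simp; omega)
    have ha : T16.Adj i ⟨i.val + 1, hi⟩ := pathGraph_adj.2 (Or.inl rfl)
    refine ⟨Walk.cons ha p, ?_⟩
    intro k hk
    rw [Walk.support_cons, List.mem_cons] at hk
    rcases hk with rfl | hk
    · refine ⟨le_rfl, ?_⟩
      rw [Fin.le_def]; omega
    · have := hp k hk
      simp only [Fin.le_def] at this ⊢
      omega

theorem T16_uniq {i j : Fin 7} (p q : T16.Walk i j) (hp : p.IsPath) (hq : q.IsPath) : p = q :=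
  (T16_isTree.existsUnique_path i j).unique hp hq

theorem T16_between {i j : Fin 7} (h : i ≤ j) (p : T16.Walk i j) (hp : p.IsPath)
    (k : Fin 7) (hk : k ∈ p.support) : i ≤ k ∧ k ≤ j := by
  obtain ⟨q, hq⟩ := T16_walk (j.val - i.val) i j (by rw [Fin.le_def] at h; omega)
  have : p = q.bypass := T16_uniq _ _ hp q.bypass_isPath
  subst this
  exact hq k (q.support_bypass_subset_support hk)

theorem F16_convex : ∀ v i j k : Fin 7, v ∈ F16 i → v ∈ F16 j → i ≤ k → k ≤ j → v ∈ F16 k := by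
  decide +kernel

theorem T16_decomp : IsTreeDecomp G16 T16 B16 where
  isTree := T16_isTree
  exists_bag := by
    simp only [mem_B16]; decide
  edge_bag := by
    intro u v h
    simp only [G16, fromRel_adj] at h
    obtain ⟨_, ⟨i, h1, h2⟩ | ⟨i, h1, h2⟩⟩ := h
    · exact ⟨i, h1, h2⟩
    · exact ⟨i, h2, h1⟩
  bag_connected := by
    intro v i j hi hj p hp k hk
    rw [mem_B16] at *
    rcases le_total i j with h | h
    · have := T16_between h p hp k hk
      exact F16_convex v i j k hi hj this.1 this.2
    · have := T16_between h p.reverse hp.reverse k (by simpa using hk)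
      exact F16_convex v j i k hj hi this.1 this.2

theorem adjT {u v : Fin 7} (h : u.val + 1 = v.val ∨ v.val + 1 = u.val) : T16.Adj u v :=
  pathGraph_adj.2 h

def W05 : T16.Walk 0 5 :=
  .cons (v := 1) (adjT (by decide)) <| .cons (v := 2) (adjT (by decide)) <|
  .cons (v := 3) (adjT (by decide)) <| .cons (v := 4) (adjT (by decide)) <|
  .cons (v := 5) (adjT (by decide)) .nil

def W56 : T16.Walk 5 6 := .cons (adjT (by decide)) .nil

theorem W05_path : W05.IsPath := by
  rw [Walk.isPath_def]; decide

theorem W06_path : (W05.append W56).IsPath := by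
  rw [Walk.isPath_def]; decide

theorem W65_path : W56.reverse.IsPath := by
  rw [Walk.isPath_def]; decide

theorem stepEnd (l₁ : List (Fin 7)) (u x w : Fin 7) (h : F16 x ∩ F16 w ⊆ F16 u) :
    SimpStep B16 (l₁ ++ [u, x, w]) (l₁ ++ [u, w]) :=
  ⟨l₁, [], u, x, w, rfl, rfl, Or.inl ((sub_B16 _ _ _).2 h)⟩

theorem noStep : ¬ ∃ l : List (Fin 7), SimpStep B16 [0, 1, 2, 3, 4, 5] l := by
  rintro ⟨l, l₁, l₂, u, x, w, h, -, hs⟩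
  simp only [sub_B16] at hs
  rcases l₁ with _ | ⟨a, _ | ⟨b, _ | ⟨c, _ | ⟨d, l₁⟩⟩⟩⟩
  case cons.cons.cons.cons =>
    have := congrArg List.length h
    simp at this
    omega
  all_goals
    simp at h
    obtain ⟨h1, h2, h3, h4⟩ := h
    try obtain ⟨h4, h5⟩ := h4
    try obtain ⟨h5, h6⟩ := h5
    try obtain ⟨h6, h7⟩ := h6
    subst_vars
    revert hs
    decide

theorem onlySelf (l : List (Fin 7))
    (h : Relation.ReflTransGen (SimpStep B16) [0, 1, 2, 3, 4, 5] l) : l = [0, 1, 2, 3, 4, 5] := by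
  rcases Relation.ReflTransGen.cases_head h with h | ⟨c, hc, -⟩
  · exact h.symm
  · exact absurd ⟨c, hc⟩ noStep

theorem lower (n : ℕ) (h : CombLenLE T16 B16 0 5 n) : 5 ≤ n := by
  obtain ⟨l, hl, hn⟩ := h W05 W05_path
  have := onlySelf l hl
  subst this
  simpa using hn

theorem stmt16 :
    -- (a) `(T16, B16)` is a tree decomposition of `G16`
    IsTreeDecomp G16 T16 B16
    -- (b) the combinatorial lengths of T_{1↔7} and of T_{7↔6} are at most 1
    ∧ CombLenLE T16 B16 0 6 1 ∧ CombLenLE T16 B16 6 5 1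
    -- (c) the path T_{1↔6} contains no redundant internal node,
    ∧ (¬ ∃ l : List (Fin 7), SimpStep B16 [0, 1, 2, 3, 4, 5] l)
    -- its only simplification is itself,
    ∧ (∀ l : List (Fin 7),
        Relation.ReflTransGen (SimpStep B16) [0, 1, 2, 3, 4, 5] l → l = [0, 1, 2, 3, 4, 5])
    -- its combinatorial length is exactly 5,
    ∧ CombLenLE T16 B16 0 5 5 ∧ (∀ n : ℕ, CombLenLE T16 B16 0 5 n → 5 ≤ n)
    -- and consequently it strictly exceeds the sum 1 + 1 of the combinatorial
    -- lengths of T_{1↔7} and T_{7↔6}: the triangle inequality fails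
    ∧ ¬ CombLenLE T16 B16 0 5 (1 + 1) := by
  refine ⟨T16_decomp, ?_, ?_, noStep, onlySelf, ?_, lower, fun h => by have := lower _ h; omega⟩
  · intro p hp
    rw [T16_uniq p _ hp W06_path]
    refine ⟨[0, 6], ?_, by simp⟩
    refine .head (stepEnd [0, 1, 2, 3] 4 5 6 (by decide)) ?_
    refine .head (stepEnd [0, 1, 2] 3 4 6 (by decide)) ?_
    refine .head (stepEnd [0, 1] 2 3 6 (by decide)) ?_
    refine .head (stepEnd [0] 1 2 6 (by decide)) ?_
    exact .head (stepEnd [] 0 1 6 (by decide)) .refl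
  · intro p hp
    rw [T16_uniq p _ hp W65_path]
    exact ⟨_, .refl, by decide⟩
  · intro p hp
    rw [T16_uniq p _ hp W05_path]
    exact ⟨_, .refl, by decide⟩
end
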